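/- (Theorem 1) Let x₀ be a Lebesgue point of μ. Assume: (1) K_n(x₀ + a/n, x₀ + a/n)/K_n(x₀, x₀) → 1 as n → ∞, uniformly for a ∈ [−A, A], for every A < ∞; (2) liminf_{n→∞} (1/(n+1)) K_n(x₀, x₀) > 0; (3) condition (3) holds at x₀. Set ρ_n = (1/n) w(x₀) K_n(x₀, x₀). Then weak bulk universality holds at x₀: uniformly for a, b in compact subsets of ℝ, K_n(x₀ + a/(n ρ_n), x₀ + b/(n ρ_n))/K_n(x₀, x₀) → sin(π(b−a))/(π(b−a)) as n → ∞ (the right side interpreted as 1 when a = b). -/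

import Mathlib

open MeasureTheory Filter Set

/-- The Christoffel–Darboux kernel `K_n(x, y) = Σ_{j=0}^n p_j(x) p_j(y)` (for real arguments,
the orthonormal polynomials being real). -/
noncomputable def CDKernel (p : ℕ → Polynomial ℝ) (n : ℕ) (x y : ℝ) : ℝ :=
  ∑ j ∈ Finset.range (n + 1), (p j).eval x * (p j).eval y

/-- The (topological) support of a measure on `ℝ`: points all of whose neighborhoods have
positive measure. -/
def measSupport (μ : Measure ℝ) : Set ℝ := {x : ℝ | ∀ U ∈ nhds x, μ U ≠ 0}

noncomputable def dirichletSum (j : ℕ) (x : ℝ) : ℝ :=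
  1 + 2 * ∑ i ∈ Finset.range j, Real.cos (2 * (i + 1) * x)

theorem sin_mul_dirichletSum (j : ℕ) (x : ℝ) :
    Real.sin x * dirichletSum j x = Real.sin ((2 * j + 1) * x) := by
  induction j with
  | zero => simp [dirichletSum]
  | succ j ih =>
    have h : dirichletSum (j + 1) x = dirichletSum j x + 2 * Real.cos (2 * (j + 1) * x) := by
      simp only [dirichletSum, Finset.sum_range_succ]; ring
    have e1 : (2 * ((j + 1 : ℕ) : ℝ) + 1) * x = 2 * (j + 1) * x + x := by push_cast; ring
    have e2 : (2 * (j : ℝ) + 1) * x = 2 * (j + 1) * x - x := by ring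
    rw [h, mul_add, ih, e1, e2, Real.sin_add, Real.sin_sub]
    ring

theorem sin_sq_mul_sum_dirichletSum (N : ℕ) (x : ℝ) :
    Real.sin x ^ 2 * ∑ j ∈ Finset.range N, dirichletSum j x = Real.sin (N * x) ^ 2 := by
  induction N with
  | zero => simp
  | succ N ih =>
    have e1 : ((N + 1 : ℕ) : ℝ) * x = N * x + x := by push_cast; ring
    have e2 : (2 * (N : ℝ) + 1) * x = N * x + (N * x + x) := by ring
    have h := sin_mul_dirichletSum N x
    rw [Finset.sum_range_succ, mul_add, ih, e1, sq (Real.sin x), mul_assoc (Real.sin x), h, e2,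
      Real.sin_add (N * x) (N * x + x), Real.sin_add, Real.cos_add]
    linear_combination -(Real.sin (N * x) ^ 2) * Real.sin_sq_add_cos_sq x

theorem integral_dirichletSum (j : ℕ) :
    ∫ x in (-(Real.pi / 2))..(Real.pi / 2), dirichletSum j x = Real.pi := by
  have h0 : ∀ i : ℕ, ∫ x in (-(Real.pi / 2))..(Real.pi / 2), Real.cos (2 * (i + 1) * x) = 0 := by
    intro i
    have hc : (2 * ((i : ℝ) + 1)) ≠ 0 := by positivity
    rw [intervalIntegral.integral_comp_mul_left (fun x => Real.cos x) hc, integral_cos]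
    have e : 2 * ((i : ℝ) + 1) * (Real.pi / 2) = ((i + 1 : ℕ) : ℝ) * Real.pi := by
      push_cast; ring
    rw [mul_neg, e, Real.sin_neg, Real.sin_nat_mul_pi]; simp
  unfold dirichletSum
  rw [intervalIntegral.integral_add (by simp)
      (Continuous.intervalIntegrable (by fun_prop) _ _), intervalIntegral.integral_const_mul,
    intervalIntegral.integral_finsetSum
      (fun i _ => Continuous.intervalIntegrable (by fun_prop) _ _)]
  simp [h0]

theorem abs_inv_sin_sq_sub_inv_sq_le {x : ℝ} (hx0 : x ≠ 0) (hx : |x| ≤ Real.pi / 2) :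
    |1 / Real.sin x ^ 2 - 1 / x ^ 2| ≤ 2 := by
  wlog hpos : 0 < x generalizing x
  · have := this (x := -x) (by simpa using hx0) (by simpa using hx)
      (by rcases lt_or_gt_of_ne hx0 with h | h
          · linarith
          · exact absurd h hpos)
    simpa using this
  rw [abs_of_pos hpos] at hx
  have h1 : Real.sin x ≤ x := Real.sin_le hpos.le
  have h2 : x - x ^ 3 / 6 < Real.sin x := Real.sin_gt_sub_cube hpos
  have h3 : 2 / Real.pi * x ≤ Real.sin x := Real.mul_le_sin hpos.le hx
  have hp4 : Real.pi ≤ 4 := Real.pi_le_four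
  have h4 : x / 2 ≤ Real.sin x := by
    refine le_trans ?_ h3
    have : (1:ℝ) / 2 ≤ 2 / Real.pi := by
      rw [div_le_div_iff₀ (by norm_num) Real.pi_pos]; linarith
    nlinarith
  have hs : 0 < Real.sin x := by linarith
  have h5 : 1 / Real.sin x ^ 2 - 1 / x ^ 2 =
      (x ^ 2 - Real.sin x ^ 2) / (Real.sin x ^ 2 * x ^ 2) := by
    field_simp
  rw [h5, abs_of_nonneg (div_nonneg (by nlinarith) (by positivity)), div_le_iff₀ (by positivity)]
  have h6 : x ^ 2 - Real.sin x ^ 2 ≤ x ^ 3 / 6 * (2 * x) := by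
    have : x ^ 2 - Real.sin x ^ 2 = (x - Real.sin x) * (x + Real.sin x) := by ring
    rw [this]
    apply mul_le_mul <;> linarith [pow_pos hpos 3]
  have h7 : (x / 2) ^ 2 ≤ Real.sin x ^ 2 := by gcongr
  nlinarith [mul_le_mul_of_nonneg_right h7 (sq_nonneg x), sq_nonneg (x^2)]

theorem mul_sinc_mul {a : ℝ} (ha : a ≠ 0) {x : ℝ} (hx : x ≠ 0) :
    a * Real.sinc (a * x) = Real.sin (a * x) / x := by
  rw [Real.sinc_of_ne_zero (mul_ne_zero ha hx)]; field_simp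

theorem abs_integral_sinc_sq_sub_pi_le {N : ℕ} (hN : 0 < N) :
    |(∫ x in (-(N * (Real.pi / 2)))..(N * (Real.pi / 2)), Real.sinc x ^ 2) - Real.pi|
      ≤ 2 * Real.pi / N := by
  have hN' : (0 : ℝ) < N := by exact_mod_cast hN
  have hcs : Continuous fun x : ℝ => (N * Real.sinc (N * x)) ^ 2 := by
    have := Real.continuous_sinc
    fun_prop
  have hcd : Continuous fun x : ℝ => ∑ j ∈ Finset.range N, dirichletSum j x := by
    unfold dirichletSum; fun_prop
  have h1 : ∫ x in (-(Real.pi / 2))..(Real.pi / 2), ((N * Real.sinc (N * x)) ^ 2 -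
      ∑ j ∈ Finset.range N, dirichletSum j x) =
      N * (∫ x in (-(N * (Real.pi / 2)))..(N * (Real.pi / 2)), Real.sinc x ^ 2)
        - N * Real.pi := by
    rw [intervalIntegral.integral_sub (hcs.intervalIntegrable _ _) (hcd.intervalIntegrable _ _),
      intervalIntegral.integral_finsetSum (fun i _ => Continuous.intervalIntegrable
        (by unfold dirichletSum; fun_prop) _ _)]
    simp only [integral_dirichletSum, mul_pow]
    rw [intervalIntegral.integral_const_mul,
      intervalIntegral.integral_comp_mul_left (fun x => Real.sinc x ^ 2) hN'.ne']
    simp only [mul_neg, smul_eq_mul, Finset.sum_const, Finset.card_range, nsmul_eq_mul]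
    field_simp
  have h2 : ‖∫ x in (-(Real.pi / 2))..(Real.pi / 2), ((N * Real.sinc (N * x)) ^ 2 -
      ∑ j ∈ Finset.range N, dirichletSum j x)‖ ≤ 2 * |Real.pi / 2 - -(Real.pi / 2)| := by
    apply intervalIntegral.norm_integral_le_of_norm_le_const_ae
    have h0 : ∀ᵐ x : ℝ, x ≠ 0 := by simp [ae_iff]
    filter_upwards [h0] with x hx0 hx
    rw [uIoc_of_le (by linarith [Real.pi_pos])] at hx
    have hxa : |x| ≤ Real.pi / 2 := abs_le.2 ⟨hx.1.le, hx.2⟩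
    have hs : Real.sin x ≠ 0 := by
      intro h
      have h3 := Real.mul_abs_le_abs_sin hxa
      rw [h, abs_zero] at h3
      have : 0 < 2 / Real.pi * |x| := by have := Real.pi_pos; positivity
      linarith
    have h4 : ∑ j ∈ Finset.range N, dirichletSum j x = Real.sin (N * x) ^ 2 / Real.sin x ^ 2 := by
      rw [← sin_sq_mul_sum_dirichletSum]; field_simp
    rw [h4, mul_sinc_mul hN'.ne' hx0]
    have h5 : (Real.sin (N * x) / x) ^ 2 - Real.sin (N * x) ^ 2 / Real.sin x ^ 2 =
        - (Real.sin (N * x) ^ 2 * (1 / Real.sin x ^ 2 - 1 / x ^ 2)) := by ring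
    rw [h5, norm_neg, norm_mul, Real.norm_eq_abs, Real.norm_eq_abs]
    have h6 := abs_inv_sin_sq_sub_inv_sq_le hx0 hxa
    have h7 : |Real.sin (N * x) ^ 2| ≤ 1 := by
      rw [abs_of_nonneg (sq_nonneg _)]; exact Real.sin_sq_le_one _
    nlinarith [abs_nonneg (1 / Real.sin x ^ 2 - 1 / x ^ 2)]
  rw [h1, ← mul_sub, norm_mul, Real.norm_eq_abs, Real.norm_eq_abs, abs_of_pos hN'] at h2
  rw [le_div_iff₀ hN', mul_comm]
  refine h2.trans (le_of_eq ?_)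
  rw [abs_of_nonneg (by linarith [Real.pi_pos])]; ring

/-- `∫ sinc² = π`. -/
theorem tendsto_integral_sinc_sq :
    Tendsto (fun R : ℝ => ∫ x in (-R)..R, Real.sinc x ^ 2) atTop (nhds Real.pi) := by
  have hc : Continuous fun x : ℝ => Real.sinc x ^ 2 := Real.continuous_sinc.pow 2
  have hmono : Monotone (fun R : ℝ => ∫ x in (-R)..R, Real.sinc x ^ 2) := by
    intro a b hab
    have h1 := intervalIntegral.integral_add_adjacent_intervals
      (hc.intervalIntegrable (μ := volume) (-b) (-a)) (hc.intervalIntegrable (-a) a)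
    have h2 := intervalIntegral.integral_add_adjacent_intervals
      (hc.intervalIntegrable (μ := volume) (-b) a) (hc.intervalIntegrable a b)
    have h3 : 0 ≤ ∫ x in (-b)..(-a), Real.sinc x ^ 2 :=
      intervalIntegral.integral_nonneg (by linarith) fun _ _ => sq_nonneg _
    have h4 : 0 ≤ ∫ x in a..b, Real.sinc x ^ 2 :=
      intervalIntegral.integral_nonneg hab fun _ _ => sq_nonneg _
    simp only
    linarith
  have hφ : Tendsto (fun N : ℕ => (N : ℝ) * (Real.pi / 2)) atTop atTop :=
    tendsto_natCast_atTop_atTop.atTop_mul_const (by linarith [Real.pi_pos])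
  rw [tendsto_iff_tendsto_subseq_of_monotone hmono hφ, tendsto_iff_norm_sub_tendsto_zero]
  refine squeeze_zero' (Eventually.of_forall fun _ => norm_nonneg _) ?_
    (tendsto_const_div_atTop_nhds_zero_nat (2 * Real.pi))
  filter_upwards [eventually_gt_atTop 0] with N hN
  exact abs_integral_sinc_sq_sub_pi_le hN

section RealRooted

variable {ι : Type*} [Fintype ι] (u : ι → ℝ)

/-- The function `∏ (1 - uᵢ z)`, a general real-rooted polynomial with value `1` at `0`. -/
noncomputable def realRootProd (z : ℂ) : ℂ := ∏ i, (1 - (u i : ℂ) * z)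

theorem hasDerivAt_realRootProd {z : ℂ} (hz : ∀ i, 1 - (u i : ℂ) * z ≠ 0) :
    HasDerivAt (realRootProd u)
      (-(realRootProd u z * ∑ i, (u i : ℂ) / (1 - (u i : ℂ) * z))) z := by
  classical
  have h := HasDerivAt.fun_finsetProd (u := Finset.univ) (f := fun i (z : ℂ) => 1 - (u i : ℂ) * z)
    (f' := fun i => -(u i : ℂ)) (x := z) (fun i _ => by
      simpa using ((hasDerivAt_id z).const_mul (u i : ℂ)).const_sub 1)
  unfold realRootProd
  refine h.congr_deriv (Eq.symm ?_)
  rw [Finset.mul_sum, ← Finset.sum_neg_distrib]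
  refine Finset.sum_congr rfl fun i _ => ?_
  rw [← Finset.mul_prod_erase Finset.univ _ (Finset.mem_univ i), smul_eq_mul]
  have := hz i
  field_simp

theorem hasDerivAt_sum_div {z : ℂ} (hz : ∀ i, 1 - (u i : ℂ) * z ≠ 0) :
    HasDerivAt (fun z : ℂ => ∑ i, (u i : ℂ) / (1 - (u i : ℂ) * z))
      (∑ i, (u i : ℂ) ^ 2 / (1 - (u i : ℂ) * z) ^ 2) z := by
  apply HasDerivAt.fun_sum
  intro i _
  have h1 : HasDerivAt (fun z : ℂ => 1 - (u i : ℂ) * z) (-(u i : ℂ)) z := by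
    simpa using ((hasDerivAt_id z).const_mul (u i : ℂ)).const_sub 1
  exact ((hasDerivAt_const z (u i : ℂ)).fun_div h1 (hz i)).congr_deriv (by ring)

theorem eventually_one_sub_mul_ne_zero {z : ℂ} (hz : ∀ i, 1 - (u i : ℂ) * z ≠ 0) :
    ∀ᶠ y in nhds z, ∀ i, 1 - (u i : ℂ) * y ≠ 0 := by
  rw [eventually_all]
  intro i
  have : Continuous fun y : ℂ => 1 - (u i : ℂ) * y := by fun_prop
  exact this.continuousAt.eventually_ne (hz i)

theorem deriv_deriv_realRootProd {z : ℂ} (hz : ∀ i, 1 - (u i : ℂ) * z ≠ 0) :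
    deriv (deriv (realRootProd u)) z =
      realRootProd u z * ((∑ i, (u i : ℂ) / (1 - (u i : ℂ) * z)) ^ 2
        - ∑ i, (u i : ℂ) ^ 2 / (1 - (u i : ℂ) * z) ^ 2) := by
  have h1 : deriv (realRootProd u) =ᶠ[nhds z]
      fun z => -(realRootProd u z * ∑ i, (u i : ℂ) / (1 - (u i : ℂ) * z)) := by
    filter_upwards [eventually_one_sub_mul_ne_zero u hz] with y hy
    exact (hasDerivAt_realRootProd u hy).deriv
  rw [h1.deriv_eq, ((hasDerivAt_realRootProd u hz).fun_mul (hasDerivAt_sum_div u hz)).fun_neg.deriv]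
  ring

theorem deriv_realRootProd_zero : deriv (realRootProd u) 0 = -∑ i, (u i : ℂ) := by
  rw [(hasDerivAt_realRootProd u (z := 0) (by simp)).deriv]
  simp [realRootProd]

theorem sq_sub_deriv_deriv_realRootProd_zero :
    deriv (realRootProd u) 0 ^ 2 - deriv (deriv (realRootProd u)) 0
      = ((∑ i, u i ^ 2 : ℝ) : ℂ) := by
  rw [deriv_realRootProd_zero, deriv_deriv_realRootProd u (by simp)]
  simp [realRootProd]

theorem abs_im_le_norm_mul_norm_one_sub (a : ℝ) (z : ℂ) :
    |z.im| ≤ ‖z‖ * ‖1 - (a : ℂ) * z‖ := by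
  have h : (star z * (1 - (a : ℂ) * z)).im = -z.im := by
    simp [Complex.mul_im]; ring
  have h2 := Complex.abs_im_le_norm (star z * (1 - (a : ℂ) * z))
  rwa [h, abs_neg, norm_mul, norm_star] at h2

theorem one_sub_mul_ne_zero_of_im_ne_zero (a : ℝ) {z : ℂ} (hz : z.im ≠ 0) :
    1 - (a : ℂ) * z ≠ 0 := by
  intro h
  have := abs_im_le_norm_mul_norm_one_sub a z
  rw [h, norm_zero, mul_zero] at this
  exact hz (abs_nonpos_iff.1 this)

theorem sum_sq_div_le_of_im_ne_zero {z : ℂ} (hz : z.im ≠ 0) :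
    ∑ i, u i ^ 2 / ‖1 - (u i : ℂ) * z‖ ^ 2 ≤ (∑ i, u i ^ 2) * (‖z‖ ^ 2 / z.im ^ 2) := by
  rw [Finset.sum_mul]
  refine Finset.sum_le_sum fun i _ => ?_
  have h1 := abs_im_le_norm_mul_norm_one_sub (u i) z
  have h2 : 0 < ‖1 - (u i : ℂ) * z‖ := norm_pos_iff.2 (one_sub_mul_ne_zero_of_im_ne_zero _ hz)
  have h3 : z.im ^ 2 ≤ ‖z‖ ^ 2 * ‖1 - (u i : ℂ) * z‖ ^ 2 := by
    rw [← mul_pow, ← sq_abs]; gcongr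
  have h4 : 0 < z.im ^ 2 := by positivity
  rw [div_eq_mul_one_div]
  refine mul_le_mul_of_nonneg_left ?_ (sq_nonneg _)
  rw [div_le_div_iff₀ (by positivity) h4]
  linarith

theorem norm_one_sub_mul_I_sq (a y : ℝ) :
    ‖1 - (a : ℂ) * (y * Complex.I)‖ ^ 2 = 1 + (a * y) ^ 2 := by
  rw [Complex.sq_norm, Complex.normSq_apply]; simp; ring

theorem sum_sq_div_le_log {y M : ℝ} (hy : y ≠ 0)
    (hM : ‖realRootProd u (y * Complex.I)‖ ^ 2 ≤ Real.exp M) :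
    ∑ i, u i ^ 2 / ‖1 - (u i : ℂ) * (y * Complex.I)‖ ^ 2 ≤ M / y ^ 2 := by
  rw [le_div_iff₀ (by positivity), Finset.sum_mul, ← Real.exp_le_exp]
  refine le_trans ?_ hM
  rw [Real.exp_sum, realRootProd, norm_prod, ← Finset.prod_pow]
  refine Finset.prod_le_prod (fun i _ => (Real.exp_pos _).le) fun i _ => ?_
  rw [norm_one_sub_mul_I_sq]
  have h1 : 0 < 1 + (u i * y) ^ 2 := by positivity
  have h2 := Real.one_sub_inv_le_log_of_pos h1
  rw [← Real.le_log_iff_exp_le h1]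
  refine le_trans (le_of_eq ?_) h2
  field_simp
  ring

/-- Bounds for the first two derivatives of `z ∏ (1 - uᵢ z)` relative to the function itself. -/
theorem norm_deriv_id_mul_realRootProd_le {z : ℂ} (hz : z.im ≠ 0) {N : ℝ}
    (hN : ∑ i, u i ^ 2 / ‖1 - (u i : ℂ) * z‖ ^ 2 ≤ N) {D : ℝ}
    (hD : D = ‖deriv (realRootProd u) 0‖ + ‖z‖ * Real.sqrt ((∑ i, u i ^ 2) * N)) :
    ‖deriv (fun z => z * realRootProd u z) z‖ ≤ (1 / ‖z‖ + D) * ‖z * realRootProd u z‖ ∧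
    ‖deriv (deriv (fun z => z * realRootProd u z)) z‖ ≤
      (N + D ^ 2 + 2 * D / ‖z‖) * ‖z * realRootProd u z‖ := by
  have hne : ∀ i, 1 - (u i : ℂ) * z ≠ 0 := fun i => one_sub_mul_ne_zero_of_im_ne_zero _ hz
  have hz0 : z ≠ 0 := by rintro rfl; simp at hz
  have hzn : 0 < ‖z‖ := norm_pos_iff.2 hz0
  set q := realRootProd u with hq
  set L := ∑ i, (u i : ℂ) / (1 - (u i : ℂ) * z) with hL
  set L' := ∑ i, (u i : ℂ) ^ 2 / (1 - (u i : ℂ) * z) ^ 2 with hL'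
  have hL'N : ‖L'‖ ≤ N := by
    refine le_trans (norm_sum_le _ _) (le_trans (le_of_eq ?_) hN)
    refine Finset.sum_congr rfl fun i _ => ?_
    rw [norm_div, norm_pow, norm_pow, Complex.norm_real, Real.norm_eq_abs, sq_abs]
  have hLD : ‖L‖ ≤ D := by
    have h1 : L = -deriv q 0 + z * ∑ i, (u i : ℂ) * ((u i : ℂ) / (1 - (u i : ℂ) * z)) := by
      rw [hq, deriv_realRootProd_zero, neg_neg, Finset.mul_sum, ← Finset.sum_add_distrib, hL]
      refine Finset.sum_congr rfl fun i _ => ?_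
      have := hne i
      field_simp
      ring
    rw [h1, hD]
    refine (norm_add_le _ _).trans ?_
    rw [norm_neg, norm_mul]
    gcongr
    refine (norm_sum_le _ _).trans ?_
    have h2 := Real.sum_mul_le_sqrt_mul_sqrt Finset.univ (fun i => |u i|)
      (fun i => |u i| / ‖1 - (u i : ℂ) * z‖)
    simp only [norm_mul, norm_div, Complex.norm_real, Real.norm_eq_abs]
    refine h2.trans ?_
    simp only [sq_abs, div_pow]
    rw [Real.sqrt_mul (Finset.sum_nonneg fun i _ => sq_nonneg _)]
    gcongr
  have hqd := hasDerivAt_realRootProd u hne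
  have e1 : deriv (fun z => z * q z) z = q z - z * (q z * L) := by
    rw [((hasDerivAt_id' z).fun_mul hqd).deriv]; ring
  have hev : deriv (fun z => z * q z) =ᶠ[nhds z] fun y => q y + y * deriv q y := by
    filter_upwards [eventually_one_sub_mul_ne_zero u hne] with y hy
    rw [((hasDerivAt_id' y).fun_mul (hasDerivAt_realRootProd u hy)).deriv,
      (hasDerivAt_realRootProd u hy).deriv]
    ring
  have hdq : DifferentiableAt ℂ (deriv q) z := by
    have hd : Differentiable ℂ q := by
      unfold q realRootProd; fun_prop
    exact hd.contDiff.differentiable_deriv_two z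
  have e2 : deriv (deriv (fun z => z * q z)) z = (z * q z) * (L ^ 2 - L' - 2 * L / z) := by
    rw [hev.deriv_eq, (hqd.fun_add ((hasDerivAt_id' z).fun_mul hdq.hasDerivAt)).deriv,
      deriv_deriv_realRootProd u hne, hqd.deriv, ← hL, ← hL', ← hq]
    field_simp
    ring
  have hD0 : 0 ≤ D := (norm_nonneg _).trans hLD
  constructor
  · have : q z - z * (q z * L) = (1 / z - L) * (z * q z) := by field_simp
    rw [e1, this, norm_mul]
    gcongr
    refine (norm_sub_le _ _).trans ?_
    rw [norm_div, norm_one]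
    gcongr
  · rw [e2, norm_mul, mul_comm]
    gcongr
    refine (norm_sub_le _ _).trans ?_
    have h3 : ‖L ^ 2 - L'‖ ≤ D ^ 2 + N := by
      refine (norm_sub_le _ _).trans ?_
      rw [norm_pow]
      gcongr
    have h4 : ‖2 * L / z‖ ≤ 2 * D / ‖z‖ := by
      rw [norm_div, norm_mul]
      simp only [Complex.norm_ofNat]
      gcongr
    linarith

end RealRooted

theorem Polynomial.exists_eval_eq_realRootProd (q : Polynomial ℂ) (h0 : q.eval 0 = 1)
    (hroots : ∀ z, q.eval z = 0 → z.im = 0) :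
    ∃ (m : ℕ) (u : Fin m → ℝ), ∀ z, q.eval z = realRootProd u z := by
  have key : ∀ s : Multiset ℂ, (∀ r ∈ s, r.im = 0 ∧ r ≠ 0) → ∃ (m : ℕ) (u : Fin m → ℝ), ∀ z,
      (s.map (fun r => z - r)).prod = (s.map (fun r => 0 - r)).prod * realRootProd u z := by
    intro s
    induction s using Multiset.induction_on with
    | empty => intro _; exact ⟨0, fun _ => 0, fun z => by simp [realRootProd]⟩
    | cons r s ih =>
      intro h
      obtain ⟨m, u, hu⟩ := ih fun r hr => h r (Multiset.mem_cons_of_mem hr)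
      obtain ⟨hr1, hr2⟩ := h r (Multiset.mem_cons_self _ _)
      refine ⟨m + 1, Fin.cons (1 / r.re) u, fun z => ?_⟩
      have hrr : (r.re : ℂ) = r := Complex.ext (by simp) (by simp [hr1])
      have e : realRootProd (Fin.cons (1 / r.re) u) z = (1 - z / r) * realRootProd u z := by
        simp only [realRootProd, Fin.prod_univ_succ, Fin.cons_zero, Fin.cons_succ]
        push_cast
        rw [hrr]; ring
      rw [Multiset.map_cons, Multiset.prod_cons, hu, Multiset.map_cons, Multiset.prod_cons, e]
      field_simp
      ring
  have hq0 : q ≠ 0 := by rintro rfl; simp at h0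
  obtain ⟨m, u, hu⟩ := key q.roots fun r hr => by
    have hr' := (Polynomial.mem_roots hq0).1 hr
    refine ⟨hroots r hr', ?_⟩
    rintro rfl
    rw [Polynomial.IsRoot.def, h0] at hr'
    exact one_ne_zero hr'
  refine ⟨m, u, fun z => ?_⟩
  have hs := IsAlgClosed.splits q
  rw [hs.eval_eq_prod_roots] at h0
  rw [hs.eval_eq_prod_roots, hu, ← mul_assoc, h0, one_mul]

theorem norm_le_of_im_sq_mul_norm_le {V : ℂ → ℂ} (hV : Differentiable ℂ V) {K : ℝ}
    (hK : ∀ z : ℂ, z.im ≠ 0 → z.im ^ 2 * ‖V z‖ ≤ K * (1 + ‖z‖) ^ 4) {r : ℝ} (hr : 1 ≤ r)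
    {z : ℂ} (hz : ‖z‖ ≤ r / 2) : ‖V z‖ ≤ 128 * K * r ^ 2 := by
  have hK0 : 0 ≤ K := by
    have h := hK Complex.I (by simp)
    have h2 : 0 ≤ Complex.I.im ^ 2 * ‖V Complex.I‖ := by positivity
    have h3 := h2.trans h
    exact nonneg_of_mul_nonneg_left h3 (by positivity)
  have hr0 : 0 < r := by linarith
  have hsphere : ∀ w ∈ Metric.sphere (0 : ℂ) r,
      ‖V w * (w ^ 2 - (r : ℂ) ^ 2) ^ 2‖ ≤ 64 * K * r ^ 6 := by
    intro w hw
    have hwr : ‖w‖ = r := by simpa using hw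
    have h1 : ‖w ^ 2 - (r : ℂ) ^ 2‖ = 2 * r * |w.im| := by
      have : w ^ 2 - (r : ℂ) ^ 2 = w * (2 * w.im * Complex.I) := by
        have h2 : (r : ℂ) ^ 2 = w * (starRingEnd ℂ) w := by
          rw [Complex.mul_conj, Complex.normSq_eq_norm_sq, hwr]; push_cast; rfl
        have h3 := Complex.sub_conj w
        push_cast at h3
        rw [h2, ← h3]; ring
      rw [this]
      simp [hwr]; ring
    by_cases him : w.im = 0
    · rw [norm_mul, norm_pow, h1, him]; simp; positivity
    · rw [norm_mul, norm_pow, h1, mul_pow, sq_abs]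
      have h2 := hK w him
      rw [hwr] at h2
      have h3 : (1 + r) ^ 4 ≤ (2 * r) ^ 4 := by gcongr; linarith
      calc ‖V w‖ * ((2 * r) ^ 2 * w.im ^ 2) = 4 * r ^ 2 * (w.im ^ 2 * ‖V w‖) := by ring
        _ ≤ 4 * r ^ 2 * (K * (2 * r) ^ 4) :=
            mul_le_mul_of_nonneg_left (h2.trans (mul_le_mul_of_nonneg_left h3 hK0)) (by positivity)
        _ = 64 * K * r ^ 6 := by ring
  have hd : Differentiable ℂ fun w => V w * (w ^ 2 - (r : ℂ) ^ 2) ^ 2 := by fun_prop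
  have h := Complex.norm_le_of_forall_mem_frontier_norm_le (U := Metric.ball (0 : ℂ) r)
    Metric.isBounded_ball hd.diffContOnCl
    (fun w hw => hsphere w (by rwa [frontier_ball _ hr0.ne'] at hw))
    (z := z) (subset_closure (by simp; linarith))
  have h1 : 3 / 4 * r ^ 2 ≤ ‖z ^ 2 - (r : ℂ) ^ 2‖ := by
    have h2 := norm_sub_norm_le ((r : ℂ) ^ 2) (z ^ 2)
    rw [norm_sub_rev] at h2
    simp only [norm_pow, Complex.norm_real, Real.norm_eq_abs, sq_abs] at h2
    have : ‖z‖ ^ 2 ≤ (r / 2) ^ 2 := by gcongr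
    nlinarith
  rw [norm_mul, norm_pow] at h
  have h2 : (3 / 4 * r ^ 2) ^ 2 ≤ ‖z ^ 2 - (r : ℂ) ^ 2‖ ^ 2 := by gcongr
  have h3 : ‖V z‖ * (3 / 4 * r ^ 2) ^ 2 ≤ 64 * K * r ^ 6 :=
    (mul_le_mul_of_nonneg_left h2 (norm_nonneg _)).trans h
  have h4 : ‖V z‖ * (9 / 16) ≤ 64 * K * r ^ 2 := by
    have : 0 < r ^ 4 := by positivity
    refine le_of_mul_le_mul_right ?_ this
    calc _ = ‖V z‖ * (3 / 4 * r ^ 2) ^ 2 := by ring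
      _ ≤ _ := h3
      _ = _ := by ring
  nlinarith [mul_nonneg hK0 (sq_nonneg r)]

/-- An entire function of moderate growth away from the real axis which is `o(|z|²)` along the
positive imaginary axis is affine. -/
theorem exists_affine_of_im_sq_mul_norm_le {V : ℂ → ℂ} (hV : Differentiable ℂ V) {K : ℝ}
    (hK : ∀ z : ℂ, z.im ≠ 0 → z.im ^ 2 * ‖V z‖ ≤ K * (1 + ‖z‖) ^ 4)
    (hI : ∀ ε : ℝ, 0 < ε → ∀ᶠ y : ℝ in atTop, ‖V (y * Complex.I)‖ ≤ ε * y ^ 2) :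
    ∃ a b : ℂ, ∀ z, V z = a + b * z := by
  have hder : ∀ n : ℕ, 3 ≤ n → iteratedDeriv n V 0 = 0 := by
    intro n hn
    have hb : ∀ r : ℝ, 1 ≤ r →
        ‖iteratedDeriv n V 0‖ ≤ (n.factorial * (128 * |K|) * 2 ^ n) * r⁻¹ := by
      intro r hr
      have hr0 : 0 < r := by linarith
      have h := Complex.norm_iteratedDeriv_le_of_forall_mem_sphere_norm_le (c := 0) (R := r / 2)
        (C := 128 * |K| * r ^ 2) (f := V) n (by positivity) hV.diffContOnCl (fun z hz => by
          refine (norm_le_of_im_sq_mul_norm_le hV hK hr ?_).trans ?_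
          · simpa using hz.le
          · gcongr; exact le_abs_self K)
      refine h.trans ?_
      obtain ⟨m, rfl⟩ := Nat.exists_eq_add_of_le hn
      rw [div_pow, div_div_eq_mul_div, div_le_iff₀ (by positivity)]
      have h1 : (1 : ℝ) ≤ r ^ m := one_le_pow₀ hr
      have h2 : r⁻¹ * r ^ (3 + m) = r ^ 2 * r ^ m := by field_simp; ring
      calc _ = ((3 + m).factorial * (128 * |K|) * 2 ^ (3 + m)) * (r ^ 2 * 1) := by ring
        _ ≤ ((3 + m).factorial * (128 * |K|) * 2 ^ (3 + m)) * (r ^ 2 * r ^ m) := by gcongr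
        _ = _ := by rw [← h2]; ring
    have hlim : Tendsto (fun r : ℝ => (n.factorial * (128 * |K|) * 2 ^ n) * r⁻¹) atTop
        (nhds ((n.factorial * (128 * |K|) * 2 ^ n) * 0)) :=
      tendsto_inv_atTop_zero.const_mul _
    rw [mul_zero] at hlim
    have := ge_of_tendsto hlim ((eventually_ge_atTop 1).mono hb)
    exact norm_le_zero_iff.1 this
  obtain ⟨a, b, c, habc⟩ : ∃ a b c : ℂ, ∀ z, V z = a + b * z + c * z ^ 2 := by
    refine ⟨iteratedDeriv 0 V 0, iteratedDeriv 1 V 0, 2⁻¹ * iteratedDeriv 2 V 0, fun z => ?_⟩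
    rw [← Complex.taylorSeries_eq_of_entire' 0 z hV, tsum_eq_sum (s := Finset.range 3)]
    · simp [Finset.sum_range_succ, Nat.factorial]
    · intro n hn
      rw [hder n (by simpa using hn)]; ring
  have hc : c = 0 := by
    by_contra hc
    have hcp : 0 < ‖c‖ := norm_pos_iff.2 hc
    have h1 : ∀ᶠ y : ℝ in atTop, ‖c‖ ≤ ‖c‖ / 2 + (‖a‖ * (y⁻¹ * y⁻¹) + ‖b‖ * y⁻¹) := by
      filter_upwards [hI (‖c‖ / 2) (by positivity), eventually_gt_atTop 0] with y hy hy0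
      rw [habc] at hy
      have h2 : ‖c * (y * Complex.I) ^ 2‖ = ‖c‖ * y ^ 2 := by
        simp
      have h3 : ‖b * (y * Complex.I)‖ = ‖b‖ * y := by
        simp [abs_of_pos hy0]
      have h4 : c * (y * Complex.I) ^ 2 = (a + b * (y * Complex.I) + c * (y * Complex.I) ^ 2)
        - (a + b * (y * Complex.I)) := by ring
      have h5 : ‖c‖ * y ^ 2 ≤ ‖c‖ / 2 * y ^ 2 + (‖a‖ + ‖b‖ * y) := by
        rw [← h2, h4]
        refine (norm_sub_le _ _).trans (add_le_add hy ((norm_add_le _ _).trans ?_))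
        rw [h3]
      have h6 : 0 < y ^ 2 := by positivity
      refine le_of_mul_le_mul_right (h5.trans (le_of_eq ?_)) h6
      field_simp
    have h2 : Tendsto (fun y : ℝ => ‖c‖ / 2 + (‖a‖ * (y⁻¹ * y⁻¹) + ‖b‖ * y⁻¹)) atTop
        (nhds (‖c‖ / 2 + (‖a‖ * (0 * 0) + ‖b‖ * 0))) := by
      have h := tendsto_inv_atTop_zero (𝕜 := ℝ)
      exact ((h.mul h).const_mul _ |>.add (h.const_mul _)).const_add _
    have h3 := ge_of_tendsto h2 h1
    linarith
  exact ⟨a, b, fun z => by rw [habc, hc]; ring⟩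


/-- The solution of `φ'' = -κ² φ`, `φ 0 = 0`, `φ' 0 = 1`. -/
theorem eq_mul_sinc_of_ode {φ φ' : ℝ → ℝ} {κ : ℝ}
    (h1 : ∀ h, HasDerivAt φ (φ' h) h) (h2 : ∀ h, HasDerivAt φ' (-(κ ^ 2 * φ h)) h)
    (h0 : φ 0 = 0) (h0' : φ' 0 = 1) (h : ℝ) : φ h = h * Real.sinc (κ * h) := by
  have hsin : ∀ h : ℝ, HasDerivAt (fun h => Real.sin (κ * h)) (κ * Real.cos (κ * h)) h :=
      fun h => by
    have := (Real.hasDerivAt_sin (κ * h)).comp h ((hasDerivAt_id h).const_mul κ)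
    simpa [mul_comm, Function.comp_def] using this
  have hcos : ∀ h : ℝ, HasDerivAt (fun h => Real.cos (κ * h)) (-(κ * Real.sin (κ * h))) h :=
    fun h => by
      have := (Real.hasDerivAt_cos (κ * h)).comp h ((hasDerivAt_id h).const_mul κ)
      simpa [mul_comm, Function.comp_def] using this
  have hA : ∀ h, φ' h * Real.cos (κ * h) + κ * φ h * Real.sin (κ * h) = 1 := by
    intro h
    have hd : ∀ h, HasDerivAt
        (fun h => φ' h * Real.cos (κ * h) + κ * φ h * Real.sin (κ * h)) 0 h := fun h =>
      (((h2 h).fun_mul (hcos h)).fun_add (((h1 h).const_mul κ).fun_mul (hsin h))).congr_deriv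
        (by ring)
    have := is_const_of_deriv_eq_zero (fun h => (hd h).differentiableAt)
      (fun h => (hd h).deriv) h 0
    simpa [h0, h0'] using this
  have hB : ∀ h, φ' h * Real.sin (κ * h) - κ * φ h * Real.cos (κ * h) = 0 := by
    intro h
    have hd : ∀ h, HasDerivAt
        (fun h => φ' h * Real.sin (κ * h) - κ * φ h * Real.cos (κ * h)) 0 h := fun h =>
      (((h2 h).fun_mul (hsin h)).fun_sub (((h1 h).const_mul κ).fun_mul (hcos h))).congr_deriv
        (by ring)
    have := is_const_of_deriv_eq_zero (fun h => (hd h).differentiableAt)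
      (fun h => (hd h).deriv) h 0
    simpa [h0, h0'] using this
  by_cases hκ : κ = 0
  · subst hκ
    have hd : ∀ h, HasDerivAt (fun h => φ h - h) 0 h := fun h => by
      have h3 := hA h
      simp only [zero_mul, Real.cos_zero, Real.sin_zero, mul_zero, add_zero, mul_one] at h3
      have := (h1 h).fun_sub (hasDerivAt_id' h)
      rwa [h3, sub_self] at this
    have := is_const_of_deriv_eq_zero (fun h => (hd h).differentiableAt)
      (fun h => (hd h).deriv) h 0
    simp only [h0, sub_zero] at this
    simp; linarith
  · by_cases hh : h = 0
    · simp [hh, h0]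
    · rw [Real.sinc_of_ne_zero (mul_ne_zero hκ hh)]
      have h3 : κ * φ h = Real.sin (κ * h) := by
        linear_combination (Real.sin (κ * h)) * hA h - Real.cos (κ * h) * hB h
          - κ * φ h * Real.sin_sq_add_cos_sq (κ * h)
      rw [← h3]; field_simp

/-- If `φ'' = -v φ` with `φ 0 = 0`, `φ' 0 = 1` and `φ h ≤ h` for `h ≥ 0`, then `v` is not negative
on a right neighbourhood of `0`. -/
theorem not_forall_neg_of_ode {φ φ' v : ℝ → ℝ}
    (h1 : ∀ h, HasDerivAt φ (φ' h) h) (h2 : ∀ h, HasDerivAt φ' (-(v h * φ h)) h)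
    (h0 : φ 0 = 0) (h0' : φ' 0 = 1) (hle : ∀ h, 0 ≤ h → φ h ≤ h) {δ : ℝ} (hδ : 0 < δ)
    (hv : ∀ h ∈ Icc 0 δ, v h < 0) : False := by
  have hφ'c : Continuous φ' := continuous_iff_continuousAt.2 fun h => (h2 h).continuousAt
  have hφc : Continuous φ := continuous_iff_continuousAt.2 fun h => (h1 h).continuousAt
  obtain ⟨η, hη, hη'⟩ : ∃ η, 0 < η ∧ ∀ h ∈ Icc 0 η, 0 < φ' h := by
    have : ∀ᶠ h in nhds (0 : ℝ), 0 < φ' h :=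
      hφ'c.continuousAt.eventually_const_lt (by rw [h0']; norm_num)
    obtain ⟨η, hη, h⟩ := Metric.eventually_nhds_iff.1 this
    refine ⟨η / 2, by positivity, fun x hx => h ?_⟩
    rw [Real.dist_eq, sub_zero, abs_of_nonneg hx.1]
    linarith [hx.2]
  set m := min δ η with hm
  have hm0 : 0 < m := lt_min hδ hη
  have hφpos : ∀ h ∈ Ioo 0 m, 0 < φ h := by
    have hmono : StrictMonoOn φ (Icc 0 m) := by
      apply strictMonoOn_of_deriv_pos (convex_Icc _ _) hφc.continuousOn
      intro x hx
      rw [interior_Icc] at hx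
      rw [(h1 x).deriv]
      exact hη' x ⟨hx.1.le, hx.2.le.trans (min_le_right _ _)⟩
    intro h hh
    have := hmono (left_mem_Icc.2 hm0.le) ⟨hh.1.le, hh.2.le⟩ hh.1
    rwa [h0] at this
  have hmono' : StrictMonoOn φ' (Icc 0 m) := by
    apply strictMonoOn_of_deriv_pos (convex_Icc _ _) hφ'c.continuousOn
    intro x hx
    rw [interior_Icc] at hx
    rw [(h2 x).deriv]
    have h3 := hv x ⟨hx.1.le, hx.2.le.trans (min_le_left _ _)⟩
    have h4 := hφpos x hx
    nlinarith
  have hmono : StrictMonoOn (fun h => φ h - h) (Icc 0 m) := by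
    apply strictMonoOn_of_deriv_pos (convex_Icc _ _) (by fun_prop)
    intro x hx
    rw [interior_Icc] at hx
    rw [((h1 x).fun_sub (hasDerivAt_id' x)).deriv]
    have := hmono' (left_mem_Icc.2 hm0.le) ⟨hx.1.le, hx.2.le⟩ hx.1
    rw [h0'] at this
    linarith
  have h5 := hmono (left_mem_Icc.2 hm0.le) (right_mem_Icc.2 hm0.le) hm0
  simp only [h0, sub_zero] at h5
  linarith [hle m hm0.le]

theorem im_deriv_eq_zero_of_real {f : ℂ → ℂ} (hf : Differentiable ℂ f)
    (hr : ∀ x : ℝ, (f x).im = 0) (x : ℝ) : (deriv f x).im = 0 := by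
  have h2 : HasDerivAt (fun y : ℝ => (f y).im) (deriv f x).im x := by
    simpa using ((hf x).hasDerivAt.const_mul (-Complex.I)).real_of_complex
  have h3 : (fun y : ℝ => (f y).im) = fun _ => 0 := funext hr
  rw [h3] at h2
  exact h2.unique (hasDerivAt_const x 0)

/-- A bound for `‖S''/S‖` at a point of modulus `r`. -/
noncomputable def logDerivBound (b σ r N : ℝ) : ℝ :=
  N + (b + r * Real.sqrt (σ * N)) ^ 2 + 2 * (b + r * Real.sqrt (σ * N)) / r

theorem logDerivBound_mono {b σ r N N' : ℝ} (hb : 0 ≤ b) (hσ : 0 ≤ σ) (hr : 0 ≤ r)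
    (hN : N ≤ N') : logDerivBound b σ r N ≤ logDerivBound b σ r N' := by
  unfold logDerivBound
  gcongr

theorem sq_mul_logDerivBound_le {b σ r y : ℝ} (hb : 0 ≤ b) (hσ : 0 ≤ σ) (hy : y ≠ 0)
    (hyr : |y| ≤ r) :
    y ^ 2 * logDerivBound b σ r (σ * (r ^ 2 / y ^ 2)) ≤
      (σ + (b + σ) ^ 2 + 2 * (b + σ)) * (1 + r) ^ 4 := by
  have hy0 : 0 < |y| := abs_pos.2 hy
  have hr : 0 < r := hy0.trans_le hyr
  have hs : Real.sqrt (σ * (σ * (r ^ 2 / y ^ 2))) = σ * r / |y| := by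
    rw [show σ * (σ * (r ^ 2 / y ^ 2)) = (σ * r / |y|) ^ 2 by rw [div_pow, sq_abs]; ring]
    exact Real.sqrt_sq (by positivity)
  unfold logDerivBound
  rw [hs]
  have e : y ^ 2 * (σ * (r ^ 2 / y ^ 2) + (b + r * (σ * r / |y|)) ^ 2
      + 2 * (b + r * (σ * r / |y|)) / r)
      = σ * r ^ 2 + (b * |y| + σ * r ^ 2) ^ 2 + 2 * (b * |y| + σ * r ^ 2) * (|y| / r) := by
    rw [← sq_abs y]
    field_simp
  rw [e]
  have h1 : |y| / r ≤ 1 := (div_le_one hr).2 hyr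
  have h2 : b * |y| + σ * r ^ 2 ≤ (b + σ) * (1 + r) ^ 2 := by
    have : b * |y| ≤ b * (1 + r) ^ 2 := by gcongr; nlinarith
    have : σ * r ^ 2 ≤ σ * (1 + r) ^ 2 := by gcongr; linarith
    linarith
  have h3 : r ^ 2 ≤ (1 + r) ^ 4 := by nlinarith [sq_nonneg r, pow_pos hr 3, pow_pos hr 4]
  have h4 : (1 + r) ^ 2 ≤ (1 + r) ^ 4 := pow_le_pow_right₀ (by linarith) (by norm_num)
  have h5 : 0 ≤ b * |y| + σ * r ^ 2 := by positivity
  calc _ ≤ σ * (1 + r) ^ 4 + ((b + σ) * (1 + r) ^ 2) ^ 2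
        + 2 * ((b + σ) * (1 + r) ^ 4) * 1 := by
        gcongr
        exact h2.trans (by gcongr)
    _ = _ := by ring

theorem eventually_logDerivBound_le {b σ : ℝ} (hb : 0 ≤ b) (hσ : 0 ≤ σ) {ε : ℝ} (hε : 0 < ε) :
    ∃ δ > 0, ∀ M : ℝ, ∀ᶠ y : ℝ in atTop,
      logDerivBound b σ y ((M + δ * y ^ 2) / y ^ 2) ≤ ε * y ^ 2 := by
  refine ⟨ε / (16 * (σ + 1)), by positivity, fun M => ?_⟩
  set δ := ε / (16 * (σ + 1)) with hδ
  have hδ0 : 0 < δ := by positivity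
  have hσδ : σ * δ ≤ ε / 16 := by
    rw [hδ, ← mul_div_assoc, div_le_div_iff₀ (by positivity) (by norm_num)]
    nlinarith
  set s := Real.sqrt (σ * (2 * δ)) with hs
  have hss : s ^ 2 = σ * (2 * δ) := Real.sq_sqrt (by positivity)
  have hsq : Tendsto (fun y : ℝ => y ^ 2) atTop atTop := tendsto_pow_atTop (by norm_num)
  filter_upwards [eventually_ge_atTop 1, hsq.eventually_ge_atTop (M / δ),
    hsq.eventually_ge_atTop ((2 * δ + 2 * b ^ 2 + 2 * b + 2 * s) / (ε / 2))] with y hy hyM hyc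
  have hy0 : 0 < y := by linarith
  have hN : (M + δ * y ^ 2) / y ^ 2 ≤ 2 * δ := by
    rw [div_le_iff₀ hδ0] at hyM
    rw [div_le_iff₀ (by positivity)]
    linarith
  refine (logDerivBound_mono hb hσ hy0.le hN).trans ?_
  unfold logDerivBound
  rw [← hs]
  rw [div_le_iff₀ (by positivity)] at hyc
  have h1 : (b + y * s) ^ 2 ≤ 2 * b ^ 2 + 4 * (σ * δ) * y ^ 2 := by
    nlinarith [sq_nonneg (b - y * s)]
  have h2 : 2 * (b + y * s) / y ≤ 2 * b + 2 * s := by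
    rw [div_le_iff₀ hy0]
    nlinarith
  nlinarith [sq_nonneg y, mul_le_mul_of_nonneg_right hσδ (sq_nonneg y)]

/-- Rigidity of the limit kernel: an entire Wronskian-one pair `S, C`, real on the real line, with
`S` satisfying log-derivative bounds of real-rooted type without Gaussian growth, generates a
sine kernel. -/
theorem exists_sinc_kernel {S C : ℂ → ℂ} (hS : Differentiable ℂ S) (hC : Differentiable ℂ C)
    (hSr : ∀ x : ℝ, (S x).im = 0) (hCr : ∀ x : ℝ, (C x).im = 0)
    (hW : ∀ x : ℝ, deriv S x * C x - S x * deriv C x = 1)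
    (hle : ∀ x y : ℝ, ‖S y * C x - S x * C y‖ ≤ |y - x|) {b σ : ℝ} (hb : 0 ≤ b) (hσ : 0 ≤ σ)
    (hS1 : ∀ z : ℂ, z.im ≠ 0 → ∃ B : ℝ, ‖deriv S z‖ ≤ B * ‖S z‖)
    (hS2 : ∀ z : ℂ, z.im ≠ 0 →
      ‖deriv (deriv S) z‖ ≤ logDerivBound b σ ‖z‖ (σ * (‖z‖ ^ 2 / z.im ^ 2)) * ‖S z‖)
    (hS3 : ∀ δ : ℝ, 0 < δ → ∃ M : ℝ, ∀ y : ℝ, 0 < y →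
      ‖deriv (deriv S) (y * Complex.I)‖ ≤
        logDerivBound b σ y ((M + δ * y ^ 2) / y ^ 2) * ‖S (y * Complex.I)‖) :
    ∃ κ : ℝ, 0 ≤ κ ∧ ∀ x y : ℝ,
      S y * C x - S x * C y = (((y - x) * Real.sinc (κ * (y - x)) : ℝ) : ℂ) := by
  have hS' : Differentiable ℂ (deriv S) := hS.contDiff.differentiable_deriv_two
  have hC' : Differentiable ℂ (deriv C) := hC.contDiff.differentiable_deriv_two
  have hS'' : Differentiable ℂ (deriv (deriv S)) := hS'.contDiff.differentiable_deriv_two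
  have hC'' : Differentiable ℂ (deriv (deriv C)) := hC'.contDiff.differentiable_deriv_two
  have hWz : ∀ z : ℂ, deriv S z * C z - S z * deriv C z = 1 := by
    have hd : Differentiable ℂ fun z => deriv S z * C z - S z * deriv C z := by fun_prop
    have han : AnalyticOnNhd ℂ (fun z => deriv S z * C z - S z * deriv C z) univ :=
      hd.differentiableOn.analyticOnNhd isOpen_univ
    have hfreq : ∃ᶠ z in nhdsWithin (0 : ℂ) {0}ᶜ, deriv S z * C z - S z * deriv C z = 1 := by
      have ht : Tendsto (fun x : ℝ => (x : ℂ)) (nhdsWithin (0 : ℝ) {0}ᶜ)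
          (nhdsWithin (0 : ℂ) {0}ᶜ) := by
        apply tendsto_nhdsWithin_of_tendsto_nhds_of_eventually_within
        · exact (Complex.continuous_ofReal.tendsto' 0 0 (by simp)).mono_left nhdsWithin_le_nhds
        · filter_upwards [self_mem_nhdsWithin] with x hx
          simpa using hx
      exact ht.frequently (Eventually.frequently (Eventually.of_forall hW))
    have := han.eqOn_of_preconnected_of_frequently_eq (analyticOnNhd_const (v := (1 : ℂ)))
      isPreconnected_univ (mem_univ 0) hfreq
    exact fun z => this (mem_univ z)
  have hW' : ∀ z : ℂ, deriv (deriv S) z * C z = S z * deriv (deriv C) z := by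
    intro z
    have h1 := (((hS' z).hasDerivAt.fun_mul (hC z).hasDerivAt).fun_sub
      ((hS z).hasDerivAt.fun_mul (hC' z).hasDerivAt))
    have h2 : (fun z => deriv S z * C z - S z * deriv C z) = fun _ => 1 := funext hWz
    rw [h2] at h1
    have := h1.unique (hasDerivAt_const z 1)
    linear_combination this
  set V : ℂ → ℂ := fun z => deriv (deriv S) z * deriv C z - deriv S z * deriv (deriv C) z with hVdef
  have hV : Differentiable ℂ V := by fun_prop
  have hVS : ∀ z, deriv (deriv S) z = -(V z * S z) := fun z => by
    simp only [hVdef]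
    linear_combination -(deriv (deriv S) z) * hWz z + deriv S z * hW' z
  have hVC : ∀ z, deriv (deriv C) z = -(V z * C z) := fun z => by
    simp only [hVdef]
    linear_combination -(deriv (deriv C) z) * hWz z + deriv C z * hW' z
  have hne : ∀ z : ℂ, z.im ≠ 0 → S z ≠ 0 := by
    intro z hz h0
    obtain ⟨B, hB⟩ := hS1 z hz
    rw [h0, norm_zero, mul_zero] at hB
    have h1 := hWz z
    rw [h0, norm_le_zero_iff.1 hB] at h1
    simp at h1
  have hVle : ∀ z : ℂ, z.im ≠ 0 → ∀ B, ‖deriv (deriv S) z‖ ≤ B * ‖S z‖ → ‖V z‖ ≤ B := by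
    intro z hz B hB
    rw [hVS, norm_neg, norm_mul] at hB
    exact le_of_mul_le_mul_right hB (norm_pos_iff.2 (hne z hz))
  obtain ⟨α, β, hαβ⟩ := exists_affine_of_im_sq_mul_norm_le hV
    (K := σ + (b + σ) ^ 2 + 2 * (b + σ)) (fun z hz =>
      (mul_le_mul_of_nonneg_left (hVle z hz _ (hS2 z hz)) (sq_nonneg _)).trans
        (sq_mul_logDerivBound_le hb hσ hz (Complex.abs_im_le_norm z)))
    (fun ε hε => by
      obtain ⟨δ, hδ, h⟩ := eventually_logDerivBound_le hb hσ hε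
      obtain ⟨M, hM⟩ := hS3 δ hδ
      filter_upwards [h M, eventually_gt_atTop 0] with y hy hy0
      exact (hVle _ (by simpa using hy0.ne') _ (hM y hy0)).trans hy)
  have hSr' := im_deriv_eq_zero_of_real hS hSr
  have hCr' := im_deriv_eq_zero_of_real hC hCr
  have hSr'' := im_deriv_eq_zero_of_real hS' hSr'
  have hCr'' := im_deriv_eq_zero_of_real hC' hCr'
  have hVr : ∀ x : ℝ, (V x).im = 0 := fun x => by
    simp [hVdef, Complex.mul_im, hSr', hCr', hSr'', hCr'']
  have hVre : ∀ x : ℝ, (V x).re = α.re + β.re * x := fun x => by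
    rw [hαβ]; simp
  have hre : ∀ {f : ℂ → ℂ}, Differentiable ℂ f → ∀ x : ℝ,
      HasDerivAt (fun y : ℝ => (f y).re) (deriv f x).re x := fun hf x =>
    HasDerivAt.real_of_complex (hf x).hasDerivAt
  set φ : ℝ → ℝ → ℝ := fun x h => (S (x + h : ℝ)).re * (C x).re - (S x).re * (C (x + h : ℝ)).re
    with hφdef
  set φ' : ℝ → ℝ → ℝ := fun x h => (deriv S (x + h : ℝ)).re * (C x).re
    - (S x).re * (deriv C (x + h : ℝ)).re with hφ'def
  have hφ : ∀ x h, ((φ x h : ℝ) : ℂ) = S (x + h : ℝ) * C x - S x * C (x + h : ℝ) := fun x h => by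
    apply Complex.ext <;> simp only [hφdef, Complex.ofReal_re, Complex.ofReal_im, Complex.sub_re,
      Complex.sub_im, Complex.mul_re, Complex.mul_im, hSr, hCr] <;> ring
  have hd1 : ∀ x h, HasDerivAt (φ x) (φ' x h) h := fun x h =>
    (((hre hS (x + h)).comp_const_add x h).mul_const _).fun_sub
      (((hre hC (x + h)).comp_const_add x h).const_mul _)
  have hd2 : ∀ x h, HasDerivAt (φ' x) (-((V (x + h : ℝ)).re * φ x h)) h := fun x h => by
    refine HasDerivAt.congr_deriv ((((hre hS' (x + h)).comp_const_add x h).mul_const _).fun_sub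
      (((hre hC' (x + h)).comp_const_add x h).const_mul _)) ?_
    rw [hVS, hVC]
    simp only [Complex.neg_re, Complex.mul_re, hSr, hCr, hφdef]
    ring
  have h0 : ∀ x, φ x 0 = 0 := fun x => by simp [hφdef]
  have h0' : ∀ x, φ' x 0 = 1 := fun x => by
    have := congrArg Complex.re (hW x)
    simp only [Complex.sub_re, Complex.mul_re, hSr, hCr, Complex.one_re] at this
    simp only [hφ'def, add_zero]
    linarith
  have hφle : ∀ x h, 0 ≤ h → φ x h ≤ h := fun x h hh => by
    have h1 := hle x (x + h)
    rw [← hφ, Complex.norm_real, Real.norm_eq_abs, add_sub_cancel_left, abs_of_nonneg hh] at h1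
    exact (le_abs_self _).trans h1
  have hVnn : ∀ x : ℝ, 0 ≤ α.re + β.re * x := by
    intro x
    by_contra hneg
    push Not at hneg
    have hcont : Continuous fun h : ℝ => α.re + β.re * (x + h) := by fun_prop
    have hev : ∀ᶠ h in nhds (0 : ℝ), α.re + β.re * (x + h) < 0 :=
      hcont.continuousAt.eventually_lt_const (by simpa using hneg)
    obtain ⟨η, hη, h⟩ := Metric.eventually_nhds_iff.1 hev
    refine not_forall_neg_of_ode (hd1 x) (v := fun h => (V (x + h : ℝ)).re) (hd2 x) (h0 x) (h0' x)
      (hφle x) (δ := η / 2) (by positivity) (fun y hy => ?_)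
    simp only [hVre]
    apply h
    rw [Real.dist_eq, sub_zero, abs_of_nonneg hy.1]
    linarith [hy.2]
  have hβ : β.re = 0 := by
    by_contra hβ
    have h1 := hVnn (-(α.re + 1) / β.re)
    rw [mul_div_cancel₀ _ hβ] at h1
    linarith
  have hα : 0 ≤ α.re := by simpa [hβ] using hVnn 0
  refine ⟨Real.sqrt α.re, Real.sqrt_nonneg _, fun x y => ?_⟩
  have h3 := eq_mul_sinc_of_ode (hd1 x) (κ := Real.sqrt α.re) (fun h => by
    have := hd2 x h
    rwa [hVre, hβ, zero_mul, add_zero, ← Real.sq_sqrt hα] at this) (h0 x) (h0' x) (y - x)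
  rw [← h3, hφ]
  simp

/-- An eventually equi-Lipschitz family converging pointwise on a compact set converges
uniformly there. -/
theorem tendstoUniformlyOn_of_dist_le {ι α β : Type*} [PseudoMetricSpace α] [PseudoMetricSpace β]
    {l : Filter ι} {K : Set α} (hK : IsCompact K) {F : ι → α → β} {f : α → β} {L : ℝ}
    (hF : ∀ᶠ n in l, ∀ x ∈ K, ∀ y ∈ K, dist (F n x) (F n y) ≤ L * dist x y)
    (hf : ∀ x ∈ K, Tendsto (fun n => F n x) l (nhds (f x))) : TendstoUniformlyOn F f l K := by
  rcases l.eq_or_neBot with rfl | hl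
  · exact Metric.tendstoUniformlyOn_iff.2 fun ε _ => by simp
  have hfL : ∀ x ∈ K, ∀ y ∈ K, dist (f x) (f y) ≤ L * dist x y := fun x hx y hy =>
    le_of_tendsto ((hf x hx).dist (hf y hy)) (hF.mono fun n h => h x hx y hy)
  rw [Metric.tendstoUniformlyOn_iff]
  intro ε hε
  set δ : ℝ := ε / (3 * (|L| + 1)) with hδ
  have hδ0 : 0 < δ := by positivity
  have hLδ : ∀ x y : α, dist x y < δ → L * dist x y < ε / 3 := fun x y h => by
    have h1 : L * dist x y ≤ |L| * δ := mul_le_mul (le_abs_self L) h.le dist_nonneg (abs_nonneg L)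
    have h2 : |L| * δ < (|L| + 1) * δ := by nlinarith
    have h3 : (|L| + 1) * δ = ε / 3 := by rw [hδ]; field_simp
    linarith
  obtain ⟨t, htK, htf, hcov⟩ := hK.finite_cover_balls hδ0
  have hev : ∀ᶠ n in l, ∀ c ∈ t, dist (F n c) (f c) < ε / 3 :=
    (htf.eventually_all).2 fun c hc => Metric.tendsto_nhds.1 (hf c (htK hc)) _ (by positivity)
  filter_upwards [hF, hev] with n h1 h2 x hx
  obtain ⟨c, hc, hxc⟩ := mem_iUnion₂.1 (hcov hx)
  rw [Metric.mem_ball] at hxc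
  have a1 := hfL x hx c (htK hc)
  have a2 := h1 c (htK hc) x hx
  rw [dist_comm c x] at a2
  have a3 := h2 c hc
  have a4 := hLδ x c hxc
  have a5 := dist_triangle4 (f x) (f c) (F n c) (F n x)
  rw [dist_comm (f c)] at a5
  linarith

/-- A holomorphic function bounded by `M` on the ball of radius `R + 1` is `M`-Lipschitz on the
ball of radius `R`. -/
theorem norm_sub_le_of_norm_le_on_ball {f : ℂ → ℂ} (hf : Differentiable ℂ f) {R M : ℝ}
    (hM : ∀ z, ‖z‖ ≤ R + 1 → ‖f z‖ ≤ M) {x y : ℂ} (hx : ‖x‖ ≤ R) (hy : ‖y‖ ≤ R) :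
    ‖f x - f y‖ ≤ M * ‖x - y‖ := by
  refine Convex.norm_image_sub_le_of_norm_deriv_le (s := Metric.closedBall (0 : ℂ) R)
    (fun z _ => hf z) (fun z hz => ?_) (convex_closedBall 0 R) (by simpa using hy)
    (by simpa using hx)
  have := Complex.norm_deriv_le_of_forall_mem_sphere_norm_le (c := z) (R := 1) (C := M) one_pos
    hf.diffContOnCl fun w hw => hM w ?_
  · simpa using this
  · have h1 : ‖w - z‖ = 1 := by simpa [dist_eq_norm] using hw
    have h2 : ‖z‖ ≤ R := by simpa using hz
    have := norm_add_le (w - z) z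
    rw [sub_add_cancel] at this
    linarith

/-- Montel's theorem along an ultrafilter. -/
theorem exists_tendstoLocallyUniformlyOn_of_locally_bounded {ι : Type*} {l : Ultrafilter ι}
    {F : ι → ℂ → ℂ} (hF : ∀ n, Differentiable ℂ (F n))
    (hb : ∀ R : ℝ, ∃ M : ℝ, ∀ᶠ n in (l : Filter ι), ∀ z, ‖z‖ ≤ R → ‖F n z‖ ≤ M) :
    ∃ f : ℂ → ℂ, Differentiable ℂ f ∧ TendstoLocallyUniformlyOn F f l univ := by
  have hlim : ∀ z : ℂ, ∃ a, Tendsto (fun n => F n z) l (nhds a) := fun z => by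
    obtain ⟨M, hM⟩ := hb ‖z‖
    obtain ⟨a, -, ha⟩ := (isCompact_closedBall (0 : ℂ) M).ultrafilter_le_nhds
      (l.map fun n => F n z) (by
        rw [le_principal_iff]
        change ∀ᶠ n in (l : Filter ι), F n z ∈ _
        filter_upwards [hM] with n hn
        simpa using hn z le_rfl)
    exact ⟨a, ha⟩
  choose f hf using hlim
  have hlu : TendstoLocallyUniformlyOn F f l univ := by
    rw [tendstoLocallyUniformlyOn_iff_forall_isCompact isOpen_univ]
    intro K _ hK
    obtain ⟨R, hR⟩ := hK.isBounded.exists_norm_le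
    obtain ⟨M, hM⟩ := hb (R + 1)
    refine tendstoUniformlyOn_of_dist_le hK (L := M) ?_ fun x _ => hf x
    filter_upwards [hM] with n hn x hx y hy
    simpa only [dist_eq_norm] using
      norm_sub_le_of_norm_le_on_ball (hF n) hn (hR x hx) (hR y hy)
  refine ⟨f, ?_, hlu⟩
  rw [← differentiableOn_univ]
  exact hlu.differentiableOn (Eventually.of_forall fun n => (hF n).differentiableOn) isOpen_univ

section OrthonormalPolynomials

variable {μ : Measure ℝ} {p : ℕ → Polynomial ℝ}

/-- Polynomials of degree less than `n` are linear combinations of `p 0, …, p (n - 1)`. -/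
theorem exists_eq_sum_of_degree_lt (hdeg : ∀ n, (p n).natDegree = n)
    (hlead : ∀ n, 0 < (p n).leadingCoeff) (n : ℕ) :
    ∀ q : Polynomial ℝ, q.degree < n →
      ∃ c : ℕ → ℝ, q = ∑ j ∈ Finset.range n, Polynomial.C (c j) * p j := by
  induction n with
  | zero =>
    intro q hq
    refine ⟨0, ?_⟩
    simpa using hq
  | succ n ih =>
    intro q hq
    have hlc : (p n).coeff n ≠ 0 := by
      have := (hlead n).ne'
      rwa [Polynomial.leadingCoeff, hdeg] at this
    set r := q.coeff n / (p n).coeff n with hr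
    obtain ⟨c, hc⟩ := ih (q - Polynomial.C r * p n) (by
      rw [Polynomial.degree_lt_iff_coeff_zero] at hq ⊢
      intro m hm
      rw [Polynomial.coeff_sub, Polynomial.coeff_C_mul]
      rcases hm.eq_or_lt with rfl | hm
      · rw [hr]; field_simp; ring
      · rw [hq m hm, Polynomial.coeff_eq_zero_of_natDegree_lt (by rwa [hdeg])]
        simp)
    refine ⟨fun j => if j = n then r else c j, ?_⟩
    rw [Finset.sum_range_succ]
    simp only [if_pos]
    rw [← sub_eq_iff_eq_add, hc]
    exact Finset.sum_congr rfl fun j hj => by rw [if_neg (Finset.mem_range.1 hj).ne]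

theorem memLp_eval (hdeg : ∀ n, (p n).natDegree = n) (hlead : ∀ n, 0 < (p n).leadingCoeff)
    (horth : ∀ n m, (∫ x, (p n).eval x * (p m).eval x ∂μ) = if n = m then 1 else 0)
    (q : Polynomial ℝ) : MemLp (fun x => q.eval x) 2 μ := by
  have hp : ∀ n, MemLp (fun x => (p n).eval x) 2 μ := fun n => by
    rw [memLp_two_iff_integrable_sq (p n).continuous.aestronglyMeasurable]
    by_contra h
    have h1 := horth n n
    simp only [← pow_two] at h1
    rw [integral_undef h] at h1
    simp at h1
  obtain ⟨c, hc⟩ := exists_eq_sum_of_degree_lt hdeg hlead (q.natDegree + 1) q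
    (Polynomial.degree_lt_iff_coeff_zero _ _ |>.2 fun m hm =>
      Polynomial.coeff_eq_zero_of_natDegree_lt hm)
  have : (fun x => q.eval x) =
      fun x => ∑ j ∈ Finset.range (q.natDegree + 1), c j * (p j).eval x := by
    funext x
    conv_lhs => rw [hc]
    simp [Polynomial.eval_finsetSum]
  rw [this]
  exact memLp_finsetSum _ fun j _ => (hp j).const_mul (c j)

theorem integrable_eval (hdeg : ∀ n, (p n).natDegree = n) (hlead : ∀ n, 0 < (p n).leadingCoeff)
    (horth : ∀ n m, (∫ x, (p n).eval x * (p m).eval x ∂μ) = if n = m then 1 else 0)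
    (q r : Polynomial ℝ) : Integrable (fun x => q.eval x * r.eval x) μ :=
  (memLp_eval hdeg hlead horth q).integrable_mul (memLp_eval hdeg hlead horth r)

/-- Expansion of a polynomial in the orthonormal basis. -/
theorem eq_sum_integral_of_degree_lt (hdeg : ∀ n, (p n).natDegree = n)
    (hlead : ∀ n, 0 < (p n).leadingCoeff)
    (horth : ∀ n m, (∫ x, (p n).eval x * (p m).eval x ∂μ) = if n = m then 1 else 0)
    {n : ℕ} {q : Polynomial ℝ} (hq : q.degree < n) :
    (q = ∑ j ∈ Finset.range n, Polynomial.C (∫ x, q.eval x * (p j).eval x ∂μ) * p j) ∧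
      ∀ m, n ≤ m → ∫ x, q.eval x * (p m).eval x ∂μ = 0 := by
  obtain ⟨c, hc⟩ := exists_eq_sum_of_degree_lt hdeg hlead n q hq
  have key : ∀ m, ∫ x, q.eval x * (p m).eval x ∂μ = if m < n then c m else 0 := fun m => by
    have : (fun x => q.eval x * (p m).eval x) =
        fun x => ∑ j ∈ Finset.range n, c j * ((p j).eval x * (p m).eval x) := by
      funext x
      conv_lhs => rw [hc]
      simp [Polynomial.eval_finsetSum, Finset.sum_mul, mul_assoc]
    rw [this, integral_finsetSum _ fun j _ =>
      (integrable_eval hdeg hlead horth (p j) (p m)).const_mul (c j)]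
    simp only [integral_const_mul, horth]
    simp
  refine ⟨?_, fun m hm => by rw [key, if_neg (by omega)]⟩
  conv_lhs => rw [hc]
  exact Finset.sum_congr rfl fun j hj => by rw [key, if_pos (Finset.mem_range.1 hj)]

/-- The Christoffel–Darboux formula. -/
theorem exists_christoffel_darboux (hdeg : ∀ n, (p n).natDegree = n)
    (hlead : ∀ n, 0 < (p n).leadingCoeff)
    (horth : ∀ n m, (∫ x, (p n).eval x * (p m).eval x ∂μ) = if n = m then 1 else 0) (n : ℕ) :
    ∃ a : ℝ, ∀ z w : ℂ,
      (w - z) * ∑ j ∈ Finset.range (n + 1), Polynomial.aeval z (p j) * Polynomial.aeval w (p j) =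
        a * (Polynomial.aeval w (p (n + 1)) * Polynomial.aeval z (p n) -
          Polynomial.aeval z (p (n + 1)) * Polynomial.aeval w (p n)) := by
  set J : ℕ → ℕ → ℝ := fun j k => ∫ x, (Polynomial.X * p j).eval x * (p k).eval x ∂μ with hJ
  have hsymm : ∀ j k, J j k = J k j := fun j k => by
    refine integral_congr_ae (Eventually.of_forall fun x => ?_)
    simp only [Polynomial.eval_mul, Polynomial.eval_X]
    ring
  have hdegX : ∀ j, (Polynomial.X * p j).degree < ((j + 2 : ℕ) : WithBot ℕ) := fun j => by
    rw [Polynomial.degree_lt_iff_coeff_zero]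
    intro m hm
    apply Polynomial.coeff_eq_zero_of_natDegree_lt
    refine lt_of_le_of_lt Polynomial.natDegree_mul_le ?_
    rw [Polynomial.natDegree_X, hdeg]
    omega
  have hfar : ∀ j k, j + 2 ≤ k → J j k = 0 := fun j k h =>
    (eq_sum_integral_of_degree_lt hdeg hlead horth (hdegX j)).2 k h
  have hexp : ∀ (j : ℕ) (z : ℂ), z * Polynomial.aeval z (p j) =
      ∑ k ∈ Finset.range (j + 2), (J j k : ℂ) * Polynomial.aeval z (p k) := fun j z => by
    have := congrArg (Polynomial.aeval z)
      (eq_sum_integral_of_degree_lt hdeg hlead horth (hdegX j)).1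
    simpa [hJ] using this
  have hrec0 : ∀ z : ℂ, z * Polynomial.aeval z (p 0) =
      J 0 0 * Polynomial.aeval z (p 0) + J 0 1 * Polynomial.aeval z (p 1) := fun z => by
    rw [hexp]; simp [Finset.sum_range_succ]
  have hrec : ∀ (j : ℕ) (z : ℂ), z * Polynomial.aeval z (p (j + 1)) =
      J j (j + 1) * Polynomial.aeval z (p j) + J (j + 1) (j + 1) * Polynomial.aeval z (p (j + 1)) +
        J (j + 1) (j + 2) * Polynomial.aeval z (p (j + 2)) := fun j z => by
    rw [hexp, Finset.sum_range_succ, Finset.sum_range_succ, Finset.sum_range_succ,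
      Finset.sum_eq_zero, hsymm (j + 1) j]
    · ring
    · intro k hk
      rw [hsymm, hfar k (j + 1) (by have := Finset.mem_range.1 hk; omega)]
      simp
  refine ⟨J n (n + 1), fun z w => ?_⟩
  induction n with
  | zero =>
    have h1 := hrec0 z
    have h2 := hrec0 w
    simp only [zero_add, Finset.range_one, Finset.sum_singleton]
    linear_combination Polynomial.aeval z (p 0) * h2 - Polynomial.aeval w (p 0) * h1
  | succ n ih =>
    have h1 := hrec n z
    have h2 := hrec n w
    rw [Finset.sum_range_succ, mul_add, ih]
    linear_combination Polynomial.aeval z (p (n + 1)) * h2 - Polynomial.aeval w (p (n + 1)) * h1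

/-- The reproducing property of the Christoffel–Darboux kernel. -/
theorem integral_CDKernel_mul_CDKernel (hdeg : ∀ n, (p n).natDegree = n)
    (hlead : ∀ n, 0 < (p n).leadingCoeff)
    (horth : ∀ n m, (∫ x, (p n).eval x * (p m).eval x ∂μ) = if n = m then 1 else 0)
    (n : ℕ) (x y : ℝ) :
    Integrable (fun t => CDKernel p n x t * CDKernel p n y t) μ ∧
      ∫ t, CDKernel p n x t * CDKernel p n y t ∂μ = CDKernel p n x y := by
  have hInt : ∀ i j, Integrable (fun t => (p i).eval x * (p j).eval y *
      ((p i).eval t * (p j).eval t)) μ := fun i j =>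
    (integrable_eval hdeg hlead horth (p i) (p j)).const_mul _
  have : (fun t => CDKernel p n x t * CDKernel p n y t) = fun t =>
      ∑ i ∈ Finset.range (n + 1), ∑ j ∈ Finset.range (n + 1),
        (p i).eval x * (p j).eval y * ((p i).eval t * (p j).eval t) := by
    funext t
    rw [CDKernel, CDKernel, Finset.sum_mul_sum]
    exact Finset.sum_congr rfl fun i _ => Finset.sum_congr rfl fun j _ => by ring
  rw [this]
  refine ⟨integrable_finsetSum _ fun i _ => integrable_finsetSum _ fun j _ => hInt i j, ?_⟩
  rw [integral_finsetSum _ fun i _ => integrable_finsetSum _ fun j _ => hInt i j, CDKernel]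
  refine Finset.sum_congr rfl fun i hi => ?_
  rw [integral_finsetSum _ fun j _ => hInt i j]
  simp only [integral_const_mul, horth, mul_ite, mul_one, mul_zero, Finset.sum_ite_eq, if_pos hi]

end OrthonormalPolynomials

/-- On a short interval, integrals against `μ` are approximated by integrals against
`w x₀ • volume`. -/
theorem abs_setIntegral_sub_le {μ : Measure ℝ} [IsFiniteMeasure μ] {w g : ℝ → ℝ}
    (hw : w = fun x => (μ.rnDeriv volume x).toReal) (hg : Continuous g) {x₀ δ M : ℝ} (hδ : 0 < δ)
    (hM : ∀ x ∈ Ioo (x₀ - δ) (x₀ + δ), |g x| ≤ M) :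
    |∫ x in Ioo (x₀ - δ) (x₀ + δ), g x ∂μ - w x₀ * ∫ x in (x₀ - δ)..(x₀ + δ), g x| ≤
      M * (((μ.singularPart volume) (Ioo (x₀ - δ) (x₀ + δ))).toReal +
        ∫ x in Ioo (x₀ - δ) (x₀ + δ), |w x - w x₀|) := by
  set I := Ioo (x₀ - δ) (x₀ + δ) with hI
  have hIm : MeasurableSet I := measurableSet_Ioo
  have hgM : ∀ ν : Measure ℝ, ∀ᵐ x ∂ν.restrict I, ‖g x‖ ≤ M := fun ν =>
    ae_restrict_of_forall_mem hIm hM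
  have hgi : ∀ ν : Measure ℝ, IsFiniteMeasure (ν.restrict I) → IntegrableOn g I ν := fun ν _ =>
    Integrable.of_bound hg.aestronglyMeasurable M (hgM ν)
  have hwi : IntegrableOn w I := by
    rw [hw]; exact Measure.integrable_toReal_rnDeriv.integrableOn
  have hfin : IsFiniteMeasure ((volume : Measure ℝ).restrict I) :=
    ⟨by simp [hI]⟩
  have hvol : IntegrableOn g I := hgi volume hfin
  have hci : IntegrableOn (fun x => w x - w x₀) I := hwi.sub (integrable_const _)
  have hsplit : ∫ x in I, g x ∂μ =
      ∫ x in I, g x ∂(μ.singularPart volume) + ∫ x in I, w x * g x := by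
    conv_lhs => rw [μ.haveLebesgueDecomposition_add volume]
    rw [Measure.restrict_add, integral_add_measure]
    · rw [setIntegral_withDensity_eq_setIntegral_toReal_smul (μ.measurable_rnDeriv volume)
        (ae_restrict_of_ae (μ.rnDeriv_lt_top volume)) g hIm]
      simp [hw]
    · exact hgi _ inferInstance
    · exact hgi _ inferInstance
  have hInt : w x₀ * ∫ x in (x₀ - δ)..(x₀ + δ), g x = ∫ x in I, w x₀ * g x := by
    rw [intervalIntegral.integral_of_le (by linarith), integral_Ioc_eq_integral_Ioo,
      integral_const_mul]
  have hdiff : (∫ x in I, w x * g x) - ∫ x in I, w x₀ * g x = ∫ x in I, (w x - w x₀) * g x := by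
    rw [← integral_sub (hwi.mul_bdd hg.aestronglyMeasurable (hgM _)) (hvol.const_mul _)]
    exact integral_congr_ae (Eventually.of_forall fun x => by ring)
  have h1 : |∫ x in I, g x ∂(μ.singularPart volume)| ≤
      M * ((μ.singularPart volume) I).toReal := by
    rw [← Real.norm_eq_abs]
    exact norm_setIntegral_le_of_norm_le_const (measure_lt_top _ _) hM
  have h2 : |∫ x in I, (w x - w x₀) * g x| ≤ M * ∫ x in I, |w x - w x₀| := by
    rw [← integral_const_mul, ← Real.norm_eq_abs]
    refine norm_integral_le_of_norm_le (hci.abs.const_mul M) ?_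
    filter_upwards [hgM volume] with x hx
    rw [norm_mul, mul_comm]
    exact mul_le_mul_of_nonneg_right hx (abs_nonneg _)
  rw [hsplit, hInt, add_sub_assoc, hdiff, mul_add]
  exact (abs_add_le _ _).trans (add_le_add h1 h2)

/-- Scaling limit of integrals at a Lebesgue point. -/
theorem tendsto_mul_setIntegral_of_tendstoUniformlyOn {μ : Measure ℝ} [IsFiniteMeasure μ]
    {w : ℝ → ℝ} (hw : w = fun x => (μ.rnDeriv volume x).toReal) {x₀ : ℝ}
    (hLeb1 : Tendsto (fun δ : ℝ => (2 * δ)⁻¹ * ∫ x in Ioo (x₀ - δ) (x₀ + δ), |w x - w x₀|)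
      (nhdsWithin 0 (Ioi 0)) (nhds 0))
    (hLeb2 : Tendsto
      (fun δ : ℝ => (2 * δ)⁻¹ * ((μ.singularPart volume) (Ioo (x₀ - δ) (x₀ + δ))).toReal)
      (nhdsWithin 0 (Ioi 0)) (nhds 0))
    {l : Filter ℕ} (hl : l ≤ atTop) {R : ℝ} (hR : 0 < R) {F : ℕ → ℝ → ℝ} {f : ℝ → ℝ}
    (hF : ∀ n, Continuous (F n)) (hf : Continuous f)
    (hlim : TendstoUniformlyOn F f l (Icc (-R) R)) :
    Tendsto (fun n : ℕ => (n : ℝ) * ∫ x in Ioo (x₀ - R / n) (x₀ + R / n), F n (n * (x - x₀)) ∂μ) l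
      (nhds (w x₀ * ∫ t in (-R)..R, f t)) := by
  obtain ⟨M, hM⟩ := isCompact_Icc.exists_bound_of_continuousOn (s := Icc (-R) R) hf.continuousOn
  have hpos : ∀ᶠ n : ℕ in l, 0 < (n : ℝ) :=
    (eventually_gt_atTop 0).filter_mono hl |>.mono fun n hn => by exact_mod_cast hn
  have hδ : Tendsto (fun n : ℕ => R / (n : ℝ)) l (nhdsWithin 0 (Ioi 0)) :=
    tendsto_nhdsWithin_iff.2 ⟨(tendsto_natCast_atTop_atTop.const_div_atTop R).mono_left hl,
      hpos.mono fun n hn => div_pos hR hn⟩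
  have hmain : Tendsto (fun n => w x₀ * ∫ t in (-R)..R, F n t) l
      (nhds (w x₀ * ∫ t in (-R)..R, f t)) := by
    refine Tendsto.const_mul _ ?_
    rw [Metric.tendsto_nhds]
    intro ε hε
    have := Metric.tendstoUniformlyOn_iff.1 hlim (ε / (4 * R)) (by positivity)
    filter_upwards [this] with n hn
    rw [dist_comm, dist_eq_norm, ← intervalIntegral.integral_sub
      (hf.intervalIntegrable _ _) ((hF n).intervalIntegrable _ _)]
    have h1 := intervalIntegral.norm_integral_le_of_norm_le_const (a := -R) (b := R)
      (f := fun t => f t - F n t) (C := ε / (4 * R)) (fun t ht => by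
        rw [uIoc_of_le (by linarith)] at ht
        exact (dist_eq_norm (f t) (F n t) ▸ hn t ⟨ht.1.le, ht.2⟩).le)
    refine h1.trans_lt ?_
    rw [abs_of_pos (by linarith)]
    have : ε / (4 * R) * (R - -R) = ε / 2 := by field_simp; ring
    linarith
  have herr := ((hLeb2.comp hδ).add (hLeb1.comp hδ)).const_mul (2 * R * (M + 1))
  simp only [add_zero, mul_zero, Function.comp_def] at herr
  refine (tendsto_iff_of_dist (squeeze_zero' (Eventually.of_forall fun _ => dist_nonneg) ?_
    herr)).2 hmain
  filter_upwards [hpos, Metric.tendstoUniformlyOn_iff.1 hlim 1 one_pos] with n hn hn1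
  have hbd : ∀ x ∈ Ioo (x₀ - R / n) (x₀ + R / n), |F n (n * (x - x₀))| ≤ M + 1 := fun x hx => by
    have e : R / n * n = R := by field_simp
    have hm : (n : ℝ) * (x - x₀) ∈ Icc (-R) R := by
      constructor <;> nlinarith [hx.1, hx.2]
    have h1 := hn1 _ hm
    have h2 := hM _ hm
    rw [dist_comm, Real.dist_eq] at h1
    rw [Real.norm_eq_abs] at h2
    have := abs_add_le (F n (n * (x - x₀)) - f (n * (x - x₀))) (f (n * (x - x₀)))
    rw [sub_add_cancel] at this
    linarith
  have key := abs_setIntegral_sub_le hw ((hF n).comp (by fun_prop : Continuous fun x : ℝ =>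
    (n : ℝ) * (x - x₀))) (div_pos hR hn) hbd
  have hsub : ∫ x in (x₀ - R / n)..(x₀ + R / n), F n (n * (x - x₀)) =
      (n : ℝ)⁻¹ * ∫ t in (-R)..R, F n t := by
    have := intervalIntegral.integral_comp_mul_sub (a := x₀ - R / n) (b := x₀ + R / n) (F n) hn.ne'
      ((n : ℝ) * x₀)
    simp only [← mul_sub] at this
    rw [this, smul_eq_mul]
    congr 2 <;> field_simp <;> ring
  simp only [Function.comp_def] at key
  rw [hsub] at key
  rw [Real.dist_eq]
  have e1 : (n : ℝ) * ∫ x in Ioo (x₀ - R / n) (x₀ + R / n), F n (n * (x - x₀)) ∂μ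
      - w x₀ * ∫ t in (-R)..R, F n t =
      n * (∫ x in Ioo (x₀ - R / n) (x₀ + R / n), F n (n * (x - x₀)) ∂μ
      - w x₀ * ((n : ℝ)⁻¹ * ∫ t in (-R)..R, F n t)) := by field_simp
  rw [e1, abs_mul, abs_of_pos hn]
  refine (mul_le_mul_of_nonneg_left key hn.le).trans (le_of_eq ?_)
  field_simp

/-- Bounds on the logarithmic derivatives of `z * g z` for a real-rooted polynomial `g`. -/
theorem norm_deriv_id_mul_le_of_real_roots {g : ℂ → ℂ} {q : Polynomial ℂ}
    (hq : ∀ z, q.eval z = g z) (h0 : g 0 = 1) (hroots : ∀ z, g z = 0 → z.im = 0) {b σ : ℝ}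
    (hb : b = ‖deriv g 0‖) (hσ : σ = ‖deriv g 0 ^ 2 - deriv (deriv g) 0‖) :
    (∀ z : ℂ, z.im ≠ 0 →
      ‖deriv (fun z => z * g z) z‖ ≤
        (1 / ‖z‖ + (b + ‖z‖ * Real.sqrt (σ * (σ * (‖z‖ ^ 2 / z.im ^ 2))))) * ‖z * g z‖ ∧
      ‖deriv (deriv fun z => z * g z) z‖ ≤
        logDerivBound b σ ‖z‖ (σ * (‖z‖ ^ 2 / z.im ^ 2)) * ‖z * g z‖) ∧
    ∀ y M : ℝ, 0 < y → ‖g (y * Complex.I)‖ ^ 2 ≤ Real.exp M →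
      ‖deriv (deriv fun z => z * g z) (y * Complex.I)‖ ≤
        logDerivBound b σ y (M / y ^ 2) * ‖y * Complex.I * g (y * Complex.I)‖ := by
  obtain ⟨m, u, hu⟩ := Polynomial.exists_eval_eq_realRootProd q (by rw [hq, h0])
    fun z hz => hroots z (by rw [← hq, hz])
  obtain rfl : g = realRootProd u := funext fun z => by rw [← hq, hu]
  have hσ' : σ = ∑ i, u i ^ 2 := by
    rw [hσ, sq_sub_deriv_deriv_realRootProd_zero, Complex.norm_real,
      Real.norm_of_nonneg (Finset.sum_nonneg fun i _ => sq_nonneg _)]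
  refine ⟨fun z hz => ?_, fun y M hy hM => ?_⟩
  · have := norm_deriv_id_mul_realRootProd_le u hz (sum_sq_div_le_of_im_ne_zero u hz) rfl
    rw [← hσ', ← hb] at this
    exact this
  · have := (norm_deriv_id_mul_realRootProd_le u (z := y * Complex.I) (by simpa using hy.ne')
      (sum_sq_div_le_log u hy.ne' hM) rfl).2
    rw [← hσ', ← hb] at this
    have hn : ‖(y : ℂ) * Complex.I‖ = y := by simp [abs_of_pos hy]
    rw [hn] at this
    exact this

/-- A Christoffel–Darboux type kernel, normalized at the origin, is the Wronskian-type kernel of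
`w * F 0 w` and an explicit function. -/
theorem exists_kernel_eq_of_christoffel_darboux {F : ℂ → ℂ → ℂ} {u v : ℂ → ℂ} {r : ℝ}
    (hu : Differentiable ℂ u) (hv : Differentiable ℂ v) (hur : ∀ x : ℝ, (u x).im = 0)
    (hvr : ∀ x : ℝ, (v x).im = 0) (hF : ∀ z w, (w - z) * F z w = r * (v w * u z - v z * u w))
    (hFd : ∀ w, Differentiable ℂ fun z => F z w) (hFd' : Differentiable ℂ (F 0))
    (h00 : F 0 0 = 1) :
    ∃ C : ℂ → ℂ, Differentiable ℂ C ∧ (∀ x : ℝ, (C x).im = 0) ∧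
      (∀ w, C w = F 0 w - w * deriv (fun z => F z w) 0) ∧
      ∀ z w, (w - z) * F z w = w * F 0 w * C z - z * F 0 z * C w := by
  have hdet : r * (deriv v 0 * u 0 - v 0 * deriv u 0) = 1 := by
    have h1 : HasDerivAt (fun w => (w - 0) * F 0 w) (1 * F 0 0 + (0 - 0) * deriv (F 0) 0) 0 :=
      ((hasDerivAt_id (0 : ℂ)).sub_const 0).fun_mul (hFd' 0).hasDerivAt
    have h2 : HasDerivAt (fun w => (r : ℂ) * (v w * u 0 - v 0 * u w))
        (r * (deriv v 0 * u 0 - v 0 * deriv u 0)) 0 :=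
      (((hv 0).hasDerivAt.mul_const _).sub ((hu 0).hasDerivAt.const_mul _)).const_mul _
    rw [funext (hF 0)] at h1
    rw [h2.unique h1, h00]
    ring
  refine ⟨fun w => r * (deriv v 0 * u w - deriv u 0 * v w), by fun_prop, fun x => ?_, fun w => ?_,
    fun z w => ?_⟩
  · have h1 := im_deriv_eq_zero_of_real hu hur 0
    have h2 := im_deriv_eq_zero_of_real hv hvr 0
    rw [Complex.ofReal_zero] at h1 h2
    simp [Complex.mul_im, h1, h2, hur, hvr]
  · have h1 : HasDerivAt (fun z => (w - z) * F z w)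
        (-1 * F 0 w + (w - 0) * deriv (fun z => F z w) 0) 0 :=
      ((hasDerivAt_id (0 : ℂ)).const_sub w).fun_mul (hFd w 0).hasDerivAt
    have h2 : HasDerivAt (fun z => (r : ℂ) * (v w * u z - v z * u w))
        (r * (v w * deriv u 0 - deriv v 0 * u w)) 0 :=
      (((hu 0).hasDerivAt.const_mul _).sub ((hv 0).hasDerivAt.mul_const _)).const_mul _
    rw [funext fun z => hF z w] at h1
    have := h2.unique h1
    linear_combination -this
  · have h1 := hF z w
    have h2 := hF 0 w
    have h3 := hF 0 z
    rw [sub_zero] at h2 h3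
    rw [h1, h2, h3]
    linear_combination -(r * (v w * u z - v z * u w)) * hdet

open ComplexConjugate in
/-- Scaling limits of normalized Christoffel–Darboux kernels of subgaussian growth whose diagonal
tends to `1` are sine kernels. -/
theorem exists_tendstoUniformlyOn_sinc {l : Ultrafilter ℕ} {F : ℕ → ℂ → ℂ → ℂ} {C : ℕ → ℂ → ℂ}
    {H : ℕ → ℂ → ℝ} (hFd : ∀ n w, Differentiable ℂ fun z => F n z w)
    (hsymm : ∀ n z w, F n z w = F n w z) (hC : ∀ n, Differentiable ℂ (C n))
    (hCr : ∀ n, ∀ x : ℝ, (C n x).im = 0)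
    (hCd : ∀ n w, C n w = F n 0 w - w * deriv (fun z => F n z w) 0)
    (hid : ∀ n z w, (w - z) * F n z w = w * F n 0 w * C n z - z * F n 0 z * C n w)
    (h00 : ∀ n, F n 0 0 = 1) (hconj : ∀ n z w, F n (conj z) (conj w) = conj (F n z w))
    (hCS : ∀ n z w, ‖F n z w‖ ^ 2 ≤ H n z * H n w) (hHpos : ∀ n z, 0 < H n z)
    (hH : ∀ n z, F n z (conj z) = H n z)
    (hpoly : ∀ n, ∃ q : Polynomial ℂ, ∀ z, q.eval z = F n 0 z)
    (hgrowth : ∀ ε : ℝ, 0 < ε → ∃ M : ℝ, ∀ R : ℝ, ∀ᶠ n in (l : Filter ℕ), ∀ z, ‖z‖ < R →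
      H n z ≤ Real.exp (M + ε * ‖z‖ ^ 2))
    (hdiag : ∀ x : ℝ, Tendsto (fun n => H n x) l (nhds 1)) :
    ∃ κ : ℝ, 0 ≤ κ ∧ ∀ R : ℝ, TendstoUniformlyOn (fun n (xy : ℝ × ℝ) => F n xy.1 xy.2)
      (fun xy => (Real.sinc (κ * (xy.2 - xy.1)) : ℂ)) l (Icc (-R) R ×ˢ Icc (-R) R) := by
  have hFd' : ∀ n z, Differentiable ℂ (F n z) := fun n z => by
    simpa only [hsymm n _ z] using hFd n z
  have hbd : ∀ R : ℝ, ∃ M : ℝ, ∀ᶠ n in (l : Filter ℕ), ∀ z w, ‖z‖ ≤ R → ‖w‖ ≤ R →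
      ‖F n z w‖ ≤ M := fun R => by
    obtain ⟨M, hM⟩ := hgrowth 1 one_pos
    refine ⟨Real.exp (M + R ^ 2), ?_⟩
    have hle : ∀ z : ℂ, ‖z‖ ≤ R → Real.exp (M + 1 * ‖z‖ ^ 2) ≤ Real.exp (M + R ^ 2) :=
        fun z hz => by
      rw [one_mul]
      gcongr
    filter_upwards [hM (R + 1)] with n hn z w hz hw
    refine abs_le_of_sq_le_sq' ((hCS n z w).trans ?_) (Real.exp_pos _).le |>.2
    rw [pow_two]
    exact mul_le_mul ((hn z (by linarith)).trans (hle z hz)) ((hn w (by linarith)).trans (hle w hw))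
      (hHpos n w).le (Real.exp_pos _).le
  obtain ⟨G, hG, hGlim⟩ := exists_tendstoLocallyUniformlyOn_of_locally_bounded (l := l)
    (F := fun n => F n 0) (fun n => hFd' n 0) fun R => by
      obtain ⟨M, hM⟩ := hbd (max R 0)
      refine ⟨M, hM.mono fun n hn z hz => hn 0 z (by simp) (hz.trans (le_max_left _ _))⟩
  obtain ⟨S, hS, hSlim⟩ := exists_tendstoLocallyUniformlyOn_of_locally_bounded (l := l)
    (F := fun n z => z * F n 0 z) (fun n => differentiable_id.fun_mul (hFd' n 0)) fun R => by
      obtain ⟨M, hM⟩ := hbd (max R 0)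
      refine ⟨max R 0 * M, hM.mono fun n hn z hz => ?_⟩
      rw [norm_mul]
      exact mul_le_mul (hz.trans (le_max_left _ _)) (hn 0 z (by simp) (hz.trans (le_max_left _ _)))
        (norm_nonneg _) (le_max_right _ _)
  obtain ⟨D, hD, hClim⟩ := exists_tendstoLocallyUniformlyOn_of_locally_bounded (l := l)
    (F := C) hC fun R => by
      obtain ⟨M, hM⟩ := hbd (max R 1)
      refine ⟨M + max R 1 * M, hM.mono fun n hn z hz => ?_⟩
      have hz' : ‖z‖ ≤ max R 1 := hz.trans (le_max_left _ _)
      have hd : ‖deriv (fun w => F n w z) 0‖ ≤ M := by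
        have := Complex.norm_deriv_le_of_forall_mem_sphere_norm_le (c := 0) (R := 1) (C := M)
          one_pos (hFd n z).diffContOnCl fun w hw => hn w z (by
            have : ‖w‖ = 1 := by simpa using hw
            rw [this]; exact le_max_right _ _) hz'
        simpa using this
      rw [hCd]
      refine (norm_sub_le _ _).trans (add_le_add (hn 0 z (by simp) hz') ?_)
      rw [norm_mul]
      exact mul_le_mul hz' hd (norm_nonneg _) (by positivity)
  have hEv : ∀ {f : ℕ → ℂ → ℂ}, (∀ n, Differentiable ℂ (f n)) →
      ∀ᶠ n in (l : Filter ℕ), DifferentiableOn ℂ (f n) univ := fun h =>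
    Eventually.of_forall fun n => (h n).differentiableOn
  have hSd : ∀ n, Differentiable ℂ fun z => z * F n 0 z := fun n =>
    differentiable_id.fun_mul (hFd' n 0)
  have hGlim' := hGlim.deriv (hEv fun n => hFd' n 0) isOpen_univ
  have hGlim'' := hGlim'.deriv (hEv fun n => (hFd' n 0).contDiff.differentiable_deriv_two)
    isOpen_univ
  have hSlim' := hSlim.deriv (hEv hSd) isOpen_univ
  have hSlim'' := hSlim'.deriv (hEv fun n => (hSd n).contDiff.differentiable_deriv_two) isOpen_univ
  have hClim' := hClim.deriv (hEv hC) isOpen_univ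
  have hSt : ∀ z, Tendsto (fun n => z * F n 0 z) l (nhds (S z)) := fun z =>
    hSlim.tendsto_at (mem_univ z)
  have hCt : ∀ z, Tendsto (fun n => C n z) l (nhds (D z)) := fun z => hClim.tendsto_at (mem_univ z)
  have hHx : ∀ n, ∀ x : ℝ, F n x x = H n x := fun n x => by
    simpa using hH n x
  have hreal : ∀ n, ∀ x y : ℝ, (F n x y).im = 0 := fun n x y => by
    have := hconj n x y
    rw [Complex.conj_ofReal, Complex.conj_ofReal] at this
    exact Complex.conj_eq_iff_im.1 this.symm
  have himt : ∀ {f : ℕ → ℂ} {a : ℂ}, (∀ n, (f n).im = 0) → Tendsto f l (nhds a) → a.im = 0 :=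
    fun {f a} hf ha => by
      refine tendsto_nhds_unique ((Complex.continuous_im.tendsto a).comp ha) ?_
      simp only [Function.comp_def, hf]
      exact tendsto_const_nhds
  have hker : ∀ x y : ℝ, Tendsto (fun n => ((y : ℂ) - x) * F n x y) l
      (nhds (S y * D x - S x * D y)) := fun x y => by
    simp only [hid]
    exact ((hSt y).mul (hCt x)).sub ((hSt x).mul (hCt y))
  have hroots : ∀ n z, F n 0 z = 0 → z.im = 0 := fun n z hz => by
    by_contra him
    have h1 : F n 0 (conj z) = 0 := by
      have := hconj n 0 z
      rw [map_zero, hz, map_zero] at this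
      exact this
    have h2 := hid n z (conj z)
    rw [hz, h1, hH] at h2
    simp only [mul_zero, zero_mul, sub_zero, mul_eq_zero, sub_eq_zero] at h2
    rcases h2 with h2 | h2
    · exact him (Complex.conj_eq_iff_im.1 h2)
    · exact (hHpos n z).ne' (by exact_mod_cast h2)
  choose q hq using hpoly
  have hlog := fun n => norm_deriv_id_mul_le_of_real_roots (hq n) (h00 n) (hroots n) rfl rfl
  have hbt := (hGlim'.tendsto_at (mem_univ 0)).norm
  have hσt := (((hGlim'.tendsto_at (mem_univ 0)).pow 2).sub (hGlim''.tendsto_at (mem_univ 0))).norm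
  obtain ⟨κ, hκ, hκ'⟩ := exists_sinc_kernel hS hD
    (fun x => himt (fun n => by
      have := hreal n 0 x
      rw [Complex.ofReal_zero] at this
      simp [Complex.mul_im, this]) (hSt x))
    (fun x => himt (fun n => hCr n x) (hCt x))
    (fun x => by
      have h1 : ∀ n, deriv (fun z => z * F n 0 z) x * C n x - x * F n 0 x * deriv (C n) x =
          H n x := fun n => by
        have h1 : HasDerivAt (fun w => (w - x) * F n x w)
            (1 * F n x x + ((x : ℂ) - x) * deriv (F n x) x) x :=
          ((hasDerivAt_id (x : ℂ)).sub_const _).fun_mul (hFd' n x x).hasDerivAt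
        have h2 : HasDerivAt (fun w => w * F n 0 w * C n x - x * F n 0 x * C n w)
            (deriv (fun z => z * F n 0 z) x * C n x - x * F n 0 x * deriv (C n) x) x :=
          ((hSd n x).hasDerivAt.mul_const _).sub ((hC n x).hasDerivAt.const_mul _)
        rw [funext (hid n x)] at h1
        rw [h2.unique h1, ← hHx]
        ring
      have h2 := ((hSlim'.tendsto_at (mem_univ (x : ℂ))).mul (hCt x)).sub
        ((hSt x).mul (hClim'.tendsto_at (mem_univ (x : ℂ))))
      refine tendsto_nhds_unique h2 ?_
      simp only [Function.comp_def, h1]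
      exact_mod_cast (Complex.continuous_ofReal.tendsto 1).comp (hdiag x))
    (fun x y => by
      have h1 := ((hdiag x).mul (hdiag y)).sqrt.const_mul |y - x|
      rw [one_mul, Real.sqrt_one, mul_one] at h1
      refine le_of_tendsto_of_tendsto (hker x y).norm h1 (Eventually.of_forall fun n => ?_)
      have h2 : ‖(y : ℂ) - x‖ = |y - x| := by
        rw [← Complex.ofReal_sub, Complex.norm_real, Real.norm_eq_abs]
      simp only [norm_mul, h2]
      exact mul_le_mul_of_nonneg_left (Real.le_sqrt_of_sq_le (hCS n x y)) (abs_nonneg _))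
    (norm_nonneg (deriv G 0)) (norm_nonneg (deriv G 0 ^ 2 - deriv (deriv G) 0))
    (fun z hz => ⟨_, le_of_tendsto_of_tendsto (hSlim'.tendsto_at (mem_univ z)).norm
      ((((hbt.add (((hσt.mul (hσt.mul_const (‖z‖ ^ 2 / z.im ^ 2))).sqrt.const_mul ‖z‖))).const_add
        (1 / ‖z‖)).mul (hSt z).norm)) (Eventually.of_forall fun n => ((hlog n).1 z hz).1)⟩)
    (fun z hz => by
      have hN := hσt.mul_const (‖z‖ ^ 2 / z.im ^ 2)
      have hE := hbt.add ((hσt.mul hN).sqrt.const_mul ‖z‖)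
      exact le_of_tendsto_of_tendsto (hSlim''.tendsto_at (mem_univ z)).norm
        (((hN.add (hE.pow 2)).add ((hE.const_mul 2).div_const ‖z‖)).mul (hSt z).norm)
        (Eventually.of_forall fun n => ((hlog n).1 z hz).2))
    (fun δ hδ => by
      obtain ⟨M, hM⟩ := hgrowth δ hδ
      refine ⟨M, fun y hy => ?_⟩
      set N : ℝ := (M + δ * y ^ 2) / y ^ 2 with hN
      have hE := hbt.add ((hσt.mul_const N).sqrt.const_mul y)
      refine le_of_tendsto_of_tendsto (hSlim''.tendsto_at (mem_univ (y * Complex.I))).norm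
        ((((hE.pow 2).const_add N).add ((hE.const_mul 2).div_const y)).mul (hSt _).norm) ?_
      filter_upwards [hM (y + 1)] with n hn
      refine (hlog n).2 y (M + δ * y ^ 2) hy ?_
      have hn1 : ‖(y : ℂ) * Complex.I‖ = y := by simp [abs_of_pos hy]
      have h1 := hCS n 0 (y * Complex.I)
      have h2 : H n 0 = 1 := by
        have := hHx n 0
        rw [Complex.ofReal_zero, h00] at this
        exact_mod_cast this.symm
      have h3 := hn (y * Complex.I) (by rw [hn1]; linarith)
      rw [h2, one_mul] at h1
      rw [hn1] at h3
      exact h1.trans h3)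
  refine ⟨κ, hκ, fun R => ?_⟩
  obtain ⟨M, hM⟩ := hbd (|R| + 1)
  have hR : ∀ x ∈ Icc (-R) R, ‖(x : ℂ)‖ ≤ |R| := fun x hx => by
    rw [Complex.norm_real, Real.norm_eq_abs]
    exact (abs_le.2 hx).trans (le_abs_self R)
  refine tendstoUniformlyOn_of_dist_le (L := 2 * M) (isCompact_Icc.prod isCompact_Icc) ?_ ?_
  · filter_upwards [hM] with n hn a ha b hb
    have hM0 : 0 ≤ M := (norm_nonneg _).trans (hn 0 0 (by simp; positivity) (by simp; positivity))
    have h1 : ‖F n a.1 a.2 - F n b.1 a.2‖ ≤ M * ‖(a.1 : ℂ) - b.1‖ :=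
      norm_sub_le_of_norm_le_on_ball (hFd n a.2) (R := |R|)
        (fun z hz => hn z a.2 hz ((hR _ ha.2).trans (by linarith))) (hR _ ha.1) (hR _ hb.1)
    have h2 : ‖F n b.1 a.2 - F n b.1 b.2‖ ≤ M * ‖(a.2 : ℂ) - b.2‖ :=
      norm_sub_le_of_norm_le_on_ball (hFd' n b.1) (R := |R|)
        (fun z hz => hn b.1 z ((hR _ hb.1).trans (by linarith)) hz) (hR _ ha.2) (hR _ hb.2)
    rw [← Complex.ofReal_sub, Complex.norm_real, ← dist_eq_norm, ← dist_eq_norm] at h1 h2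
    have h3 : dist a.1 b.1 ≤ dist a b := le_max_left _ _
    have h4 : dist a.2 b.2 ≤ dist a b := le_max_right _ _
    have h5 := dist_triangle (F n a.1 a.2) (F n b.1 a.2) (F n b.1 b.2)
    nlinarith
  · rintro ⟨x, y⟩ -
    rcases eq_or_ne x y with rfl | hxy
    · simp only [hHx, sub_self, mul_zero, Real.sinc_zero]
      exact (Complex.continuous_ofReal.tendsto 1).comp (hdiag x)
    · have hne : ((y : ℂ) - x) ≠ 0 := sub_ne_zero.2 fun h => hxy (by exact_mod_cast h.symm)
      have h1 := (hker x y).const_mul ((y : ℂ) - x)⁻¹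
      rw [hκ'] at h1
      simp only [inv_mul_cancel_left₀ hne] at h1
      convert h1 using 2
      push_cast
      field_simp

section ScaledKernel

open ComplexConjugate Polynomial

/-- The Christoffel–Darboux kernel at complex arguments, rescaled around `x₀` and normalized to be
`1` at the origin. -/
noncomputable def scaledKernel (p : ℕ → Polynomial ℝ) (x₀ : ℝ) (n : ℕ) (z w : ℂ) : ℂ :=
  (∑ j ∈ Finset.range (n + 1), aeval ((x₀ : ℂ) + z / n) (p j) * aeval ((x₀ : ℂ) + w / n) (p j)) /
    (CDKernel p n x₀ x₀ : ℂ)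

/-- The values of `scaledKernel` on pairs of conjugate points. -/
noncomputable def scaledDiag (p : ℕ → Polynomial ℝ) (x₀ : ℝ) (n : ℕ) (z : ℂ) : ℝ :=
  (∑ j ∈ Finset.range (n + 1), ‖aeval ((x₀ : ℂ) + z / n) (p j)‖ ^ 2) / CDKernel p n x₀ x₀

variable {μ : Measure ℝ} {p : ℕ → Polynomial ℝ}

theorem exists_pos_zero_eq_C (hdeg : ∀ n, (p n).natDegree = n)
    (hlead : ∀ n, 0 < (p n).leadingCoeff) : ∃ c : ℝ, 0 < c ∧ p 0 = Polynomial.C c := by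
  have h := Polynomial.eq_C_of_natDegree_eq_zero (hdeg 0)
  refine ⟨(p 0).coeff 0, ?_, h⟩
  have := hlead 0
  rwa [Polynomial.leadingCoeff, hdeg 0] at this

theorem CDKernel_self_pos (hdeg : ∀ n, (p n).natDegree = n)
    (hlead : ∀ n, 0 < (p n).leadingCoeff) (n : ℕ) (x : ℝ) : 0 < CDKernel p n x x := by
  obtain ⟨c, hc, hp⟩ := exists_pos_zero_eq_C hdeg hlead
  refine Finset.sum_pos' (fun j _ => mul_self_nonneg _) ⟨0, by simp, ?_⟩
  rw [hp, Polynomial.eval_C]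
  positivity

theorem aeval_add_ofReal_div (q : Polynomial ℝ) (x₀ : ℝ) (n : ℕ) (x : ℝ) :
    aeval ((x₀ : ℂ) + x / n) q = ((q.eval (x₀ + x / n) : ℝ) : ℂ) := by
  have := Polynomial.aeval_ofReal (K := ℂ) q (x₀ + x / n)
  push_cast at this
  simpa using this

theorem scaledKernel_ofReal (x₀ : ℝ) (n : ℕ) (x y : ℝ) :
    scaledKernel p x₀ n x y =
      ((CDKernel p n (x₀ + x / n) (x₀ + y / n) / CDKernel p n x₀ x₀ : ℝ) : ℂ) := by
  simp only [scaledKernel, aeval_add_ofReal_div, CDKernel]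
  push_cast
  rfl

theorem scaledDiag_ofReal (x₀ : ℝ) (n : ℕ) (x : ℝ) :
    scaledDiag p x₀ n x = CDKernel p n (x₀ + x / n) (x₀ + x / n) / CDKernel p n x₀ x₀ := by
  simp only [scaledDiag, aeval_add_ofReal_div, CDKernel, Complex.norm_real, Real.norm_eq_abs,
    sq_abs, ← pow_two]

theorem scaledKernel_symm (x₀ : ℝ) (n : ℕ) (z w : ℂ) :
    scaledKernel p x₀ n z w = scaledKernel p x₀ n w z := by
  simp only [scaledKernel, mul_comm]

theorem differentiable_aeval_add_div (q : Polynomial ℝ) (x₀ : ℝ) (n : ℕ) :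
    Differentiable ℂ fun z : ℂ => aeval ((x₀ : ℂ) + z / n) q :=
  (q.differentiable_aeval (𝕜 := ℂ)).comp
    ((differentiable_id.div_const (n : ℂ)).const_add (x₀ : ℂ))

theorem differentiable_scaledKernel (x₀ : ℝ) (n : ℕ) (w : ℂ) :
    Differentiable ℂ fun z => scaledKernel p x₀ n z w := by
  unfold scaledKernel
  exact (Differentiable.fun_sum fun j _ =>
    (differentiable_aeval_add_div (p j) x₀ n).mul_const _).div_const _

theorem aeval_add_conj_div (q : Polynomial ℝ) (x₀ : ℝ) (n : ℕ) (z : ℂ) :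
    aeval ((x₀ : ℂ) + conj z / n) q = conj (aeval ((x₀ : ℂ) + z / n) q) := by
  rw [← Polynomial.aeval_conj]
  simp

theorem scaledKernel_conj (x₀ : ℝ) (n : ℕ) (z w : ℂ) :
    scaledKernel p x₀ n (conj z) (conj w) = conj (scaledKernel p x₀ n z w) := by
  simp only [scaledKernel, aeval_add_conj_div, map_div₀, map_sum, map_mul, Complex.conj_ofReal]

theorem scaledKernel_conj_right (x₀ : ℝ) (n : ℕ) (z : ℂ) :
    scaledKernel p x₀ n z (conj z) = scaledDiag p x₀ n z := by
  simp only [scaledKernel, scaledDiag, aeval_add_conj_div, Complex.mul_conj']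
  push_cast
  rfl

theorem scaledDiag_pos (hdeg : ∀ n, (p n).natDegree = n) (hlead : ∀ n, 0 < (p n).leadingCoeff)
    (x₀ : ℝ) (n : ℕ) (z : ℂ) : 0 < scaledDiag p x₀ n z := by
  refine div_pos ?_ (CDKernel_self_pos hdeg hlead n x₀)
  obtain ⟨c, hc, hp⟩ := exists_pos_zero_eq_C hdeg hlead
  refine Finset.sum_pos' (fun j _ => sq_nonneg _) ⟨0, by simp, ?_⟩
  rw [hp, Polynomial.aeval_C]
  have : (algebraMap ℝ ℂ) c ≠ 0 := by simpa using hc.ne'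
  positivity

theorem norm_scaledKernel_sq_le (x₀ : ℝ) (n : ℕ) (z w : ℂ) :
    ‖scaledKernel p x₀ n z w‖ ^ 2 ≤ scaledDiag p x₀ n z * scaledDiag p x₀ n w := by
  rw [scaledKernel, scaledDiag, scaledDiag, norm_div, div_pow, Complex.norm_real, Real.norm_eq_abs,
    sq_abs, div_mul_div_comm, ← pow_two (CDKernel p n x₀ x₀)]
  gcongr
  refine le_trans ?_ (Finset.sum_mul_sq_le_sq_mul_sq _ _ _)
  gcongr
  refine (norm_sum_le _ _).trans_eq ?_
  simp only [norm_mul]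

theorem exists_polynomial_eq_scaledKernel (x₀ : ℝ) (n : ℕ) :
    ∃ q : Polynomial ℂ, ∀ z, q.eval z = scaledKernel p x₀ n 0 z := by
  refine ⟨Polynomial.C ((CDKernel p n x₀ x₀ : ℂ)⁻¹) * ∑ j ∈ Finset.range (n + 1),
    Polynomial.C (aeval ((x₀ : ℂ) + 0 / n) (p j)) * ((p j).map (algebraMap ℝ ℂ)).comp
      (Polynomial.C (x₀ : ℂ) + Polynomial.C ((n : ℂ)⁻¹) * Polynomial.X), fun z => ?_⟩
  rw [Polynomial.eval_mul, Polynomial.eval_C, Polynomial.eval_finsetSum, scaledKernel,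
    Finset.mul_sum, Finset.sum_div]
  refine Finset.sum_congr rfl fun j _ => ?_
  rw [Polynomial.eval_mul, Polynomial.eval_C, Polynomial.eval_comp, Polynomial.eval_map_algebraMap]
  simp [div_eq_inv_mul]

theorem scaledKernel_zero_zero (hdeg : ∀ n, (p n).natDegree = n)
    (hlead : ∀ n, 0 < (p n).leadingCoeff) (x₀ : ℝ) (n : ℕ) : scaledKernel p x₀ n 0 0 = 1 := by
  have := scaledKernel_ofReal (p := p) x₀ n 0 0
  simpa [div_self (CDKernel_self_pos hdeg hlead n x₀).ne'] using this

theorem exists_scaledKernel_eq (hdeg : ∀ n, (p n).natDegree = n)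
    (hlead : ∀ n, 0 < (p n).leadingCoeff)
    (horth : ∀ n m, (∫ x, (p n).eval x * (p m).eval x ∂μ) = if n = m then 1 else 0)
    (x₀ : ℝ) (n : ℕ) :
    ∃ C : ℂ → ℂ, Differentiable ℂ C ∧ (∀ x : ℝ, (C x).im = 0) ∧
      (∀ w, C w = scaledKernel p x₀ n 0 w - w * deriv (fun z => scaledKernel p x₀ n z w) 0) ∧
      ∀ z w, (w - z) * scaledKernel p x₀ n z w =
        w * scaledKernel p x₀ n 0 w * C z - z * scaledKernel p x₀ n 0 z * C w := by
  have hd := differentiable_scaledKernel (p := p) x₀ n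
  have hd' : Differentiable ℂ (scaledKernel p x₀ n 0) := by
    simpa only [scaledKernel_symm x₀ n _ 0] using hd 0
  have h00 := scaledKernel_zero_zero hdeg hlead x₀ n
  have hreal : ∀ (j : ℕ) (x : ℝ), (aeval ((x₀ : ℂ) + x / n) (p j)).im = 0 := fun j x => by
    rw [← Complex.conj_eq_iff_im, ← aeval_add_conj_div, Complex.conj_ofReal]
  rcases Nat.eq_zero_or_pos n with rfl | hn
  · refine exists_kernel_eq_of_christoffel_darboux (u := fun _ => 1) (v := id) (r := 1)
      (differentiable_const _) differentiable_id (by simp) (by simp) (fun z w => ?_) hd hd' h00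
    have : scaledKernel p x₀ 0 z w = scaledKernel p x₀ 0 0 0 := by simp [scaledKernel]
    rw [this, h00]
    simp
  · obtain ⟨a, ha⟩ := exists_christoffel_darboux hdeg hlead horth n
    have hn' : (n : ℂ) ≠ 0 := by exact_mod_cast hn.ne'
    have hk : (CDKernel p n x₀ x₀ : ℂ) ≠ 0 := by
      exact_mod_cast (CDKernel_self_pos hdeg hlead n x₀).ne'
    refine exists_kernel_eq_of_christoffel_darboux
      (u := fun z => aeval ((x₀ : ℂ) + z / n) (p n))
      (v := fun z => aeval ((x₀ : ℂ) + z / n) (p (n + 1))) (r := n * a / CDKernel p n x₀ x₀)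
      (differentiable_aeval_add_div _ _ _) (differentiable_aeval_add_div _ _ _) (hreal n)
      (hreal (n + 1)) (fun z w => ?_) hd hd' h00
    have h := ha ((x₀ : ℂ) + z / n) ((x₀ : ℂ) + w / n)
    rw [add_sub_add_left_eq_sub, ← sub_div, div_mul_eq_mul_div, div_eq_iff hn'] at h
    rw [scaledKernel, ← mul_div_assoc, h]
    push_cast
    field_simp

end ScaledKernel

theorem integral_sinc_sq_le {R : ℝ} (hR : 0 ≤ R) :
    ∫ x in (-R)..R, Real.sinc x ^ 2 ≤ Real.pi := by
  refine ge_of_tendsto tendsto_integral_sinc_sq ?_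
  filter_upwards [eventually_ge_atTop R] with r hr
  refine intervalIntegral.integral_mono_interval (by linarith) (by linarith) hr
    (Eventually.of_forall fun x => sq_nonneg _)
    ((Real.continuous_sinc.pow 2).intervalIntegrable _ _)

theorem mul_sinc (x : ℝ) : x * Real.sinc x = Real.sin x := by
  rcases eq_or_ne x 0 with rfl | hx
  · simp
  · rw [Real.sinc_of_ne_zero hx]
    field_simp

theorem sinc_sq_le_of_le_abs {x r : ℝ} (hr : 0 < r) (hx : r ≤ |x|) :
    Real.sinc x ^ 2 ≤ 1 / r ^ 2 := by
  rw [le_div_iff₀ (by positivity)]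
  have h1 : Real.sinc x ^ 2 * x ^ 2 ≤ 1 := by
    rw [← mul_pow, mul_comm, mul_sinc]
    exact Real.sin_sq_le_one x
  have h2 : r ^ 2 ≤ x ^ 2 := sq_le_sq.2 (by rwa [abs_of_pos hr])
  nlinarith [sq_nonneg (Real.sinc x)]

/-- Translates of `sinc` by large multiples of `2 * π` are almost orthogonal to `sinc` from
below. -/
theorem neg_integral_sinc_mul_sinc_sub_le {T R ε : ℝ} {k : ℕ} (hTk : T = k * (2 * Real.pi))
    (hT : 0 < T) (hR : T ≤ R) (hε : 0 < ε) :
    -∫ u in (-R)..R, Real.sinc u * Real.sinc (u - T) ≤ ε * Real.pi + 2 / (T * ε) := by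
  have hcont : Continuous fun u => Real.sinc u * Real.sinc (u - T) := by fun_prop
  have hi : ∀ a b : ℝ, IntervalIntegrable (fun u => Real.sinc u * Real.sinc (u - T)) volume a b :=
    fun a b => hcont.intervalIntegrable a b
  have hsinT : Real.sinc T = 0 := by
    have := Real.sin_add_nat_mul_two_pi 0 k
    rw [zero_add, Real.sin_zero, ← hTk] at this
    rw [Real.sinc_of_ne_zero hT.ne', this, zero_div]
  have hprod : ∀ u, u * (u - T) * (Real.sinc u * Real.sinc (u - T)) = Real.sin u ^ 2 := fun u => by
    have h1 := mul_sinc u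
    have h2 := mul_sinc (u - T)
    rw [hTk, Real.sin_sub_nat_mul_two_pi, ← hTk] at h2
    linear_combination Real.sin u * h1 + u * Real.sinc u * h2
  have hnn : ∀ u, 0 ≤ u * (u - T) → 0 ≤ Real.sinc u * Real.sinc (u - T) := fun u hu => by
    rcases hu.eq_or_lt with h | h
    · rcases mul_eq_zero.1 h.symm with rfl | h
      · simp [hsinT]
      · rw [sub_eq_zero.1 h, hsinT, zero_mul]
    · exact nonneg_of_mul_nonneg_right (hprod u ▸ sq_nonneg (Real.sin u)) h
  have hleft : 0 ≤ ∫ u in (-R)..0, Real.sinc u * Real.sinc (u - T) :=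
    intervalIntegral.integral_nonneg (by linarith) fun u hu => hnn u (by nlinarith [hu.1, hu.2])
  have hright : 0 ≤ ∫ u in T..R, Real.sinc u * Real.sinc (u - T) :=
    intervalIntegral.integral_nonneg hR fun u hu => hnn u (by nlinarith [hu.1, hu.2])
  have hmid : -∫ u in (0 : ℝ)..T, Real.sinc u * Real.sinc (u - T) ≤
      ε * Real.pi + 2 / (T * ε) := by
    have hpt : ∀ u ∈ Icc 0 T, -(Real.sinc u * Real.sinc (u - T)) ≤
        ε / 2 * (Real.sinc u ^ 2 + Real.sinc (u - T) ^ 2) + 2 / (T ^ 2 * ε) := fun u hu => by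
      have amgm : ∀ a b : ℝ, b ^ 2 ≤ 1 / (T / 2) ^ 2 →
          -(a * b) ≤ ε / 2 * (a ^ 2 + b ^ 2) + 2 / (T ^ 2 * ε) := fun a b hb => by
        have h1 : -(a * b) ≤ ε / 2 * a ^ 2 + b ^ 2 / (2 * ε) := by
          have : ε / 2 * a ^ 2 + b ^ 2 / (2 * ε) + a * b = (ε * a + b) ^ 2 / (2 * ε) := by
            field_simp; ring
          have : 0 ≤ (ε * a + b) ^ 2 / (2 * ε) := by positivity
          linarith
        have h2 : b ^ 2 / (2 * ε) ≤ 1 / (T / 2) ^ 2 / (2 * ε) := by gcongr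
        have h3 : 1 / (T / 2) ^ 2 / (2 * ε) = 2 / (T ^ 2 * ε) := by field_simp
        nlinarith [sq_nonneg b]
      rcases le_total (T / 2) u with h | h
      · have := amgm (Real.sinc (u - T)) (Real.sinc u)
          (sinc_sq_le_of_le_abs (by positivity) (h.trans (le_abs_self u)))
        rw [mul_comm (Real.sinc u), add_comm (Real.sinc u ^ 2)]
        exact this
      · exact amgm (Real.sinc u) (Real.sinc (u - T)) (sinc_sq_le_of_le_abs (by positivity) (by
          rw [abs_sub_comm]
          exact le_trans (by linarith) (le_abs_self (T - u))))
    have hc : Continuous fun u => ε / 2 * (Real.sinc u ^ 2 + Real.sinc (u - T) ^ 2) := by fun_prop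
    have hc1 : Continuous fun u => Real.sinc u ^ 2 := by fun_prop
    have hc2 : Continuous fun u => Real.sinc (u - T) ^ 2 := by fun_prop
    rw [← intervalIntegral.integral_neg]
    refine (intervalIntegral.integral_mono_on hT.le (hi 0 T).neg
      ((hc.intervalIntegrable _ _).add intervalIntegrable_const) hpt).trans ?_
    rw [intervalIntegral.integral_add (hc.intervalIntegrable _ _) intervalIntegrable_const,
      intervalIntegral.integral_const_mul, intervalIntegral.integral_add
      (hc1.intervalIntegrable _ _) (hc2.intervalIntegrable _ _),
      intervalIntegral.integral_comp_sub_right (fun u => Real.sinc u ^ 2),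
      intervalIntegral.integral_const, sub_zero, zero_sub, sub_self, smul_eq_mul,
      add_comm (∫ _ in _.._, _),
      intervalIntegral.integral_add_adjacent_intervals (hc1.intervalIntegrable _ _)
      (hc1.intervalIntegrable _ _)]
    have h1 := integral_sinc_sq_le hT.le
    have h2 : T * (2 / (T ^ 2 * ε)) = 2 / (T * ε) := by field_simp
    rw [h2]
    nlinarith [Real.pi_pos]
  rw [← intervalIntegral.integral_add_adjacent_intervals (hi (-R) 0) (hi 0 R),
    ← intervalIntegral.integral_add_adjacent_intervals (hi 0 T) (hi T R)]
  linarith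

/-- Zeros of functions converging to a scaled `sinc` converge to the zeros of the limit. -/
theorem exists_tendsto_zero_of_tendstoUniformlyOn_sinc {l : Ultrafilter ℕ} {g : ℕ → ℝ → ℝ}
    (hg : ∀ n, Continuous (g n)) {κ T : ℝ} (hκ : 0 < κ) {k : ℕ} (hTk : T = k * (2 * Real.pi))
    (hT : 0 < T) (hlim : ∀ R : ℝ,
      TendstoUniformlyOn g (fun y => Real.sinc (κ * y)) l (Icc (-R) R)) :
    ∃ t : ℕ → ℝ, Tendsto t l (nhds (T / κ)) ∧ ∀ᶠ n in (l : Filter ℕ), g n (t n) = 0 := by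
  have hπ := Real.pi_pos
  have hk : 1 ≤ (k : ℝ) := by
    rcases Nat.eq_zero_or_pos k with rfl | h
    · simp [hTk] at hT
    · exact_mod_cast h
  have hT2 : 2 * Real.pi ≤ T := by rw [hTk]; nlinarith
  have hptw : ∀ y, Tendsto (fun n => g n y) l (nhds (Real.sinc (κ * y))) := fun y =>
    (hlim |y|).tendsto_at ⟨neg_abs_le y, le_abs_self y⟩
  set a := (T - Real.pi / 2) / κ with ha
  set b := (T + Real.pi / 2) / κ with hb
  have hab : a ≤ b := by
    rw [ha, hb]; gcongr; linarith
  have hκa : κ * a = T - Real.pi / 2 := by rw [ha]; field_simp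
  have hκb : κ * b = T + Real.pi / 2 := by rw [hb]; field_simp
  have hsa : Real.sinc (κ * a) < 0 := by
    have h1 := mul_sinc (κ * a)
    have h2 : Real.sin (κ * a) = -1 := by
      rw [hκa, hTk, sub_eq_neg_add, Real.sin_add_nat_mul_two_pi, Real.sin_neg, Real.sin_pi_div_two]
    have h3 : 0 < κ * a := by rw [hκa]; linarith
    by_contra! h
    nlinarith
  have hsb : 0 < Real.sinc (κ * b) := by
    have h1 := mul_sinc (κ * b)
    have h2 : Real.sin (κ * b) = 1 := by
      rw [hκb, hTk, add_comm, Real.sin_add_nat_mul_two_pi, Real.sin_pi_div_two]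
    have h3 : 0 < κ * b := by rw [hκb]; linarith
    by_contra! h
    nlinarith
  have hex : ∀ n, ∃ t ∈ Icc a b, (g n a < 0 ∧ 0 < g n b) → g n t = 0 := fun n => by
    by_cases h : g n a < 0 ∧ 0 < g n b
    · obtain ⟨t, ht, ht0⟩ := intermediate_value_Icc hab (hg n).continuousOn
        (show (0 : ℝ) ∈ Icc (g n a) (g n b) from ⟨h.1.le, h.2.le⟩)
      exact ⟨t, ht, fun _ => ht0⟩
    · exact ⟨a, ⟨le_rfl, hab⟩, fun h' => absurd h' h⟩
  choose t htab ht0 using hex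
  have hzero : ∀ᶠ n in (l : Filter ℕ), g n (t n) = 0 := by
    filter_upwards [(hptw a).eventually_lt_const hsa, (hptw b).eventually_const_lt hsb] with n h1 h2
    exact ht0 n ⟨h1, h2⟩
  obtain ⟨t', ht'ab, ht'⟩ := (isCompact_Icc (a := a) (b := b)).ultrafilter_le_nhds (l.map t)
    (le_principal_iff.2 (mem_map.2 (univ_mem' htab)))
  have ht : Tendsto t l (nhds t') := ht'
  refine ⟨t, ?_, hzero⟩
  have ha0 : 0 < a := by rw [ha]; exact div_pos (by linarith) hκ
  have hsub : Icc a b ⊆ Icc (-b) b := Icc_subset_Icc (by linarith) le_rfl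
  have hlim0 : Tendsto (fun n => g n (t n)) l (nhds (Real.sinc (κ * t'))) :=
    (hlim b).tendsto_comp (Continuous.continuousOn (by fun_prop) t' (hsub ht'ab))
      (tendsto_nhdsWithin_iff.2 ⟨ht, Eventually.of_forall fun n => hsub (htab n)⟩)
  have hsinc : Real.sinc (κ * t') = 0 :=
    tendsto_nhds_unique hlim0 (tendsto_const_nhds.congr' (hzero.mono fun n hn => hn.symm))
  have hsin : Real.sin (κ * t' - T) = 0 := by
    rw [hTk, Real.sin_sub_nat_mul_two_pi, ← mul_sinc, hsinc, mul_zero]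
  have h1 : T - Real.pi / 2 ≤ κ * t' := hκa ▸ mul_le_mul_of_nonneg_left ht'ab.1 hκ.le
  have h2 : κ * t' ≤ T + Real.pi / 2 := hκb ▸ mul_le_mul_of_nonneg_left ht'ab.2 hκ.le
  rw [Real.sin_eq_zero_iff_of_lt_of_lt (by linarith) (by linarith)] at hsin
  rwa [show T / κ = t' by field_simp; linarith]

theorem TendstoUniformlyOn.comp_tendstoUniformlyOn {ι α β γ : Type*} [PseudoMetricSpace α]
    [PseudoMetricSpace γ] {l : Filter ι} {F : ι → α → γ} {f : α → γ} {K : Set α} {s : Set β}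
    {g : ι → β → α} {g₀ : β → α} (hF : TendstoUniformlyOn F f l K) (hf : UniformContinuousOn f K)
    (hg : TendstoUniformlyOn g g₀ l s) (hgK : ∀ᶠ n in l, ∀ y ∈ s, g n y ∈ K)
    (hg₀ : ∀ y ∈ s, g₀ y ∈ K) :
    TendstoUniformlyOn (fun n y => F n (g n y)) (fun y => f (g₀ y)) l s := by
  rw [Metric.tendstoUniformlyOn_iff] at hF hg ⊢
  intro ε hε
  obtain ⟨δ, hδ, hδf⟩ := Metric.uniformContinuousOn_iff.1 hf (ε / 2) (by positivity)
  filter_upwards [hF (ε / 2) (by positivity), hg δ hδ, hgK] with n h1 h2 h3 y hy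
  have a1 := h1 _ (h3 y hy)
  have a2 := hδf _ (hg₀ y hy) _ (h3 y hy) (h2 y hy)
  have a3 := dist_triangle (f (g₀ y)) (f (g n y)) (F n (g n y))
  linarith

theorem TendstoUniformlyOn.mul_of_abs_le_one {ι α : Type*} {l : Filter ι} {F G : ι → α → ℝ}
    {f g : α → ℝ} {s : Set α} (hF : TendstoUniformlyOn F f l s) (hG : TendstoUniformlyOn G g l s)
    (hf : ∀ x ∈ s, |f x| ≤ 1) (hg : ∀ x ∈ s, |g x| ≤ 1) :
    TendstoUniformlyOn (fun n x => F n x * G n x) (fun x => f x * g x) l s := by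
  rw [Metric.tendstoUniformlyOn_iff] at hF hG ⊢
  intro ε hε
  set δ := min (ε / 4) 1 with hδ
  have hδ0 : 0 < δ := by positivity
  have hδ1 : δ ≤ 1 := min_le_right _ _
  have hδε : δ ≤ ε / 4 := min_le_left _ _
  filter_upwards [hF δ hδ0, hG δ hδ0] with n h1 h2 x hx
  have a1 := h1 x hx
  have a2 := h2 x hx
  rw [Real.dist_eq] at a1 a2 ⊢
  have e : f x * g x - F n x * G n x =
      f x * (g x - G n x) + (f x - F n x) * g x - (f x - F n x) * (g x - G n x) := by ring
  rw [e]
  have b1 : |f x * (g x - G n x)| ≤ 1 * δ := by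
    rw [abs_mul]; exact mul_le_mul (hf x hx) a2.le (abs_nonneg _) zero_le_one
  have b2 : |(f x - F n x) * g x| ≤ δ * 1 := by
    rw [abs_mul]; exact mul_le_mul a1.le (hg x hx) (abs_nonneg _) hδ0.le
  have b3 : |(f x - F n x) * (g x - G n x)| ≤ δ * 1 := by
    rw [abs_mul]; exact mul_le_mul a1.le (a2.le.trans hδ1) (abs_nonneg _) hδ0.le
  have b4 := abs_sub (f x * (g x - G n x) + (f x - F n x) * g x) ((f x - F n x) * (g x - G n x))
  have b5 := abs_add_le (f x * (g x - G n x)) ((f x - F n x) * g x)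
  linarith

/-- The scale of a limiting sine kernel at a Lebesgue point is determined by the reproducing
property. -/
theorem sinc_scale_mul_eq_pi {μ : Measure ℝ} [IsFiniteMeasure μ] {w : ℝ → ℝ}
    (hw : w = fun x => (μ.rnDeriv volume x).toReal) {x₀ : ℝ} (hwx₀ : 0 < w x₀)
    (hLeb1 : Tendsto (fun δ : ℝ => (2 * δ)⁻¹ * ∫ x in Ioo (x₀ - δ) (x₀ + δ), |w x - w x₀|)
      (nhdsWithin 0 (Ioi 0)) (nhds 0))
    (hLeb2 : Tendsto
      (fun δ : ℝ => (2 * δ)⁻¹ * ((μ.singularPart volume) (Ioo (x₀ - δ) (x₀ + δ))).toReal)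
      (nhdsWithin 0 (Ioi 0)) (nhds 0))
    {l : Ultrafilter ℕ} (hl : (l : Filter ℕ) ≤ atTop) {f : ℕ → ℝ → ℝ → ℝ} {C : ℕ → ℝ → ℝ}
    {m : ℕ → ℝ} {κ τ : ℝ} (hκ : 0 ≤ κ) (hf : ∀ n x, Continuous (f n x))
    (hrep : ∀ n, 0 < n → ∀ x y,
      Integrable (fun s => f n x (n * (s - x₀)) * f n y (n * (s - x₀))) μ ∧
        n * ∫ s, f n x (n * (s - x₀)) * f n y (n * (s - x₀)) ∂μ = m n * f n x y)
    (h00 : ∀ n, f n 0 0 = 1)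
    (hid : ∀ n x y, (y - x) * f n x y = y * f n 0 y * C n x - x * f n 0 x * C n y)
    (hm : Tendsto m l (nhds (w x₀ * τ)))
    (hlim : ∀ R : ℝ, TendstoUniformlyOn (fun n (xy : ℝ × ℝ) => f n xy.1 xy.2)
      (fun xy => Real.sinc (κ * (xy.2 - xy.1))) l (Icc (-R) R ×ˢ Icc (-R) R)) :
    κ * τ = Real.pi := by
  have hpos : ∀ᶠ n : ℕ in (l : Filter ℕ), 0 < n := (eventually_gt_atTop 0).filter_mono hl
  have hunif : ∀ R : ℝ, ∀ t : ℕ → ℝ, ∀ t' : ℝ, Tendsto t l (nhds t') →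
      (∀ᶠ n in (l : Filter ℕ), t n ∈ Icc (-R) R) →
      TendstoUniformlyOn (fun n y => f n (t n) y) (fun y => Real.sinc (κ * (y - t'))) l
        (Icc (-R) R) := fun R t t' ht htR => by
    have ht' : t' ∈ Icc (-R) R := isClosed_Icc.mem_of_tendsto ht htR
    refine (hlim R).comp_tendstoUniformlyOn (g := fun n y => (t n, y)) (g₀ := fun y => (t', y))
      ((isCompact_Icc.prod isCompact_Icc).uniformContinuousOn_of_continuous
        (Continuous.continuousOn (by fun_prop))) ?_ (htR.mono fun n hn y hy => ⟨hn, hy⟩)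
      fun y hy => ⟨ht', hy⟩
    rw [Metric.tendstoUniformlyOn_iff]
    intro ε hε
    filter_upwards [Metric.tendsto_nhds.1 ht ε hε] with n hn y _
    rw [dist_comm, Prod.dist_eq, dist_self, max_eq_left dist_nonneg]
    exact hn
  have hloc : ∀ R : ℝ, 0 < R → ∀ t : ℕ → ℝ, ∀ t' : ℝ, Tendsto t l (nhds t') →
      (∀ᶠ n in (l : Filter ℕ), t n ∈ Icc (-R) R) →
      Tendsto (fun n : ℕ => (n : ℝ) * ∫ s in Ioo (x₀ - R / n) (x₀ + R / n),
        f n 0 (n * (s - x₀)) * f n (t n) (n * (s - x₀)) ∂μ) l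
        (nhds (w x₀ * ∫ y in (-R)..R, Real.sinc (κ * (y - 0)) * Real.sinc (κ * (y - t')))) :=
    fun R hR t t' ht htR => by
      refine tendsto_mul_setIntegral_of_tendstoUniformlyOn hw hLeb1 hLeb2 hl hR
        (F := fun n y => f n 0 y * f n (t n) y)
        (f := fun y => Real.sinc (κ * (y - 0)) * Real.sinc (κ * (y - t')))
        (fun n => (hf n 0).mul (hf n _)) (by fun_prop) ?_
      exact (hunif R (fun _ => 0) 0 tendsto_const_nhds (Eventually.of_forall fun _ =>
        ⟨by linarith, hR.le⟩)).mul_of_abs_le_one (hunif R t t' ht htR)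
        (fun _ _ => Real.abs_sinc_le_one _) fun _ _ => Real.abs_sinc_le_one _
  have hsq : ∀ R : ℝ, 0 < R →
      ∫ y in (-R)..R, Real.sinc (κ * (y - 0)) * Real.sinc (κ * (y - 0)) ≤ τ :=
    fun R hR => by
      have h1 := hloc R hR (fun _ => 0) 0 tendsto_const_nhds (Eventually.of_forall fun _ =>
        ⟨by linarith, hR.le⟩)
      refine le_of_mul_le_mul_left (le_of_tendsto_of_tendsto h1 hm ?_) hwx₀
      filter_upwards [hpos] with n hn
      obtain ⟨hi, he⟩ := hrep n hn 0 0
      rw [h00, mul_one] at he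
      rw [← he]
      exact mul_le_mul_of_nonneg_left (setIntegral_le_integral hi
        (Eventually.of_forall fun s => mul_self_nonneg _)) (Nat.cast_nonneg n)
  have hκ0 : 0 < κ := by
    refine hκ.lt_of_ne fun h => ?_
    have h1 := hsq (|τ| + 1) (by positivity)
    simp only [← h, zero_mul, Real.sinc_zero, mul_one, intervalIntegral.integral_const,
      smul_eq_mul] at h1
    linarith [le_abs_self τ, abs_nonneg τ]
  have hscale : ∀ R t : ℝ, κ * ∫ y in (-R)..R, Real.sinc (κ * (y - 0)) * Real.sinc (κ * (y - t)) =
      ∫ u in (-(κ * R))..(κ * R), Real.sinc u * Real.sinc (u - κ * t) := fun R t => by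
    have := intervalIntegral.integral_comp_mul_left (a := -R) (b := R)
      (fun u => Real.sinc u * Real.sinc (u - κ * t)) hκ0.ne'
    simp only [← mul_sub, smul_eq_mul] at this
    simp only [sub_zero]
    rw [this, mul_neg]
    field_simp
  have hscale0 : ∀ R : ℝ, κ * ∫ y in (-R)..R, Real.sinc (κ * (y - 0)) * Real.sinc (κ * (y - 0)) =
      ∫ u in (-(κ * R))..(κ * R), Real.sinc u ^ 2 := fun R => by
    rw [hscale]
    simp only [mul_zero, sub_zero, pow_two]
  apply le_antisymm
  · have hbound : ∀ ε : ℝ, 0 < ε → ∀ k : ℕ, 0 < k →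
        κ * τ ≤ Real.pi + 4 * (ε * Real.pi + 2 / (k * (2 * Real.pi) * ε)) := by
      intro ε hε k hk
      have hπ := Real.pi_pos
      have hk' : (0 : ℝ) < k := by exact_mod_cast hk
      set T : ℝ := k * (2 * Real.pi) with hT
      have hT0 : 0 < T := by positivity
      have hsinT : Real.sin T = 0 := by
        have := Real.sin_add_nat_mul_two_pi 0 k
        rwa [zero_add, Real.sin_zero] at this
      obtain ⟨t, ht, hzero⟩ := exists_tendsto_zero_of_tendstoUniformlyOn_sinc (l := l)
        (g := fun n => f n 0) (fun n => hf n 0) hκ0 hT hT0 fun R => by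
          simpa only [sub_zero] using (hunif |R| (fun _ => 0) 0 tendsto_const_nhds
            (Eventually.of_forall fun _ => ⟨by linarith [abs_nonneg R], abs_nonneg R⟩)).mono
            (Icc_subset_Icc (neg_le_neg (le_abs_self R)) (le_abs_self R))
      set t' := T / κ with ht'
      have ht'0 : 0 < t' := by positivity
      have hκt' : κ * t' = T := by rw [ht']; field_simp
      set R := t' + Real.pi / κ with hR
      have hRt : t' < R := by rw [hR]; linarith [show 0 < Real.pi / κ by positivity]
      have hR0 : 0 < R := by linarith
      have htpos : ∀ᶠ n in (l : Filter ℕ), 0 < t n := ht.eventually_const_lt ht'0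
      have htR : ∀ᶠ n in (l : Filter ℕ), t n < R := ht.eventually_lt_const hRt
      have htmem : ∀ᶠ n in (l : Filter ℕ), t n ∈ Icc (-R) R := by
        filter_upwards [htpos, htR] with n h1 h2
        exact ⟨by linarith, h2.le⟩
      have hC : ∀ᶠ n in (l : Filter ℕ), 1 / 2 ≤ C n (t n) := by
        set y := Real.pi / (2 * κ) with hy
        have hy0 : 0 < y := by positivity
        have hκy : κ * y = Real.pi / 2 := by rw [hy]; field_simp
        have hyR : y ∈ Icc (-R) R := by
          refine ⟨by linarith, ?_⟩
          have : y ≤ Real.pi / κ := by rw [hy]; gcongr; linarith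
          linarith
        have h1 := (hunif R t t' ht htmem).tendsto_at hyR
        have h2 := (hunif R (fun _ => 0) 0 tendsto_const_nhds
          (Eventually.of_forall fun _ => ⟨by linarith, hR0.le⟩)).tendsto_at hyR
        have e1 : (y - t') * Real.sinc (κ * (y - t')) = 1 / κ := by
          rw [eq_div_iff hκ0.ne', mul_comm, ← mul_assoc, mul_sinc, mul_sub, hκy, hκt', hT,
            Real.sin_sub_nat_mul_two_pi, Real.sin_pi_div_two]
        have e2 : y * Real.sinc (κ * (y - 0)) = 1 / κ := by
          rw [eq_div_iff hκ0.ne', mul_comm, ← mul_assoc, sub_zero, mul_sinc, hκy,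
            Real.sin_pi_div_two]
        have h3 := ((tendsto_const_nhds (x := y)).sub ht).mul h1
        have h4 := (tendsto_const_nhds (x := y)).mul h2
        rw [e1] at h3
        rw [e2] at h4
        have h5 := h3.div h4 (by positivity)
        rw [div_self (by positivity)] at h5
        filter_upwards [h5.eventually_const_lt (show (1 / 2 : ℝ) < 1 by norm_num),
          h4.eventually_const_lt (show (0 : ℝ) < 1 / κ by positivity), hzero] with n g1 g2 g3
        have g4 := hid n (t n) y
        rw [g3, mul_zero, zero_mul, sub_zero] at g4
        simp only [Pi.div_apply] at g1
        rw [g4, mul_div_cancel_left₀ _ g2.ne'] at g1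
        exact g1.le
      have hle : ∀ᶠ n in (l : Filter ℕ), m n ≤
          (n * ∫ s in Ioo (x₀ - R / n) (x₀ + R / n),
            f n 0 (n * (s - x₀)) * f n 0 (n * (s - x₀)) ∂μ) -
          4 * (n * ∫ s in Ioo (x₀ - R / n) (x₀ + R / n),
            f n 0 (n * (s - x₀)) * f n (t n) (n * (s - x₀)) ∂μ) := by
        filter_upwards [hpos, hzero, htpos, htR, hC] with n hn h1 h2 h3 h4
        have hn' : (0 : ℝ) < n := by exact_mod_cast hn
        obtain ⟨i1, e1⟩ := hrep n hn 0 0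
        obtain ⟨i2, e2⟩ := hrep n hn 0 (t n)
        rw [h1, mul_zero] at e2
        rw [h00, mul_one] at e1
        have hI : MeasurableSet (Ioo (x₀ - R / n) (x₀ + R / n)) := measurableSet_Ioo
        have s1 := integral_add_compl hI i1
        have s2 := integral_add_compl hI i2
        have hcompl : ∫ s in (Ioo (x₀ - R / n) (x₀ + R / n))ᶜ,
              f n 0 (n * (s - x₀)) * f n 0 (n * (s - x₀)) ∂μ ≤
            ∫ s in (Ioo (x₀ - R / n) (x₀ + R / n))ᶜ,
              4 * (f n 0 (n * (s - x₀)) * f n (t n) (n * (s - x₀))) ∂μ := by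
          refine setIntegral_mono_on i1.integrableOn (i2.const_mul 4).integrableOn hI.compl ?_
          intro s hs
          set y : ℝ := n * (s - x₀) with hy
          have hyR : R ≤ |y| := by
            by_contra! hlt
            refine hs ?_
            rw [abs_lt] at hlt
            constructor
            · have : -R / n < s - x₀ := by rw [div_lt_iff₀ hn']; linarith
              rw [neg_div] at this
              linarith
            · have : s - x₀ < R / n := by rw [lt_div_iff₀ hn']; linarith
              linarith
          have h5 := hid n (t n) y
          rw [h1, mul_zero, zero_mul, sub_zero] at h5
          have h6 : 0 < y * (y - t n) ∧ y * (y - t n) ≤ 2 * y ^ 2 := by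
            rcases le_abs.1 hyR with h | h
            · have : 0 < y - t n := by linarith
              exact ⟨mul_pos (by linarith) this, by nlinarith⟩
            · have : y - t n < 0 := by linarith
              exact ⟨mul_pos_of_neg_of_neg (by linarith) this, by nlinarith⟩
          refine le_of_mul_le_mul_left ?_ h6.1
          calc y * (y - t n) * (f n 0 y * f n 0 y) ≤ 2 * y ^ 2 * (f n 0 y * f n 0 y) :=
                mul_le_mul_of_nonneg_right h6.2 (mul_self_nonneg _)
            _ ≤ 4 * C n (t n) * (y ^ 2 * (f n 0 y * f n 0 y)) := by
                have := mul_nonneg (sq_nonneg y) (mul_self_nonneg (f n 0 y))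
                nlinarith
            _ = 4 * (y * f n 0 y) * (y * f n 0 y * C n (t n)) := by ring
            _ = 4 * (y * f n 0 y) * ((y - t n) * f n (t n) y) := by rw [h5]
            _ = y * (y - t n) * (4 * (f n 0 y * f n (t n) y)) := by ring
        rw [integral_const_mul] at hcompl
        have hcompl' := mul_le_mul_of_nonneg_left hcompl hn'.le
        rw [← s1, mul_add] at e1
        rw [← s2, mul_add] at e2
        linarith
      have hlimit := le_of_tendsto_of_tendsto hm
        ((hloc R hR0 (fun _ => 0) 0 tendsto_const_nhds
          (Eventually.of_forall fun _ => ⟨by linarith, hR0.le⟩)).sub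
          ((hloc R hR0 t t' ht htmem).const_mul 4)) hle
      have h1 : τ ≤ (∫ y in (-R)..R, Real.sinc (κ * (y - 0)) * Real.sinc (κ * (y - 0))) -
          4 * ∫ y in (-R)..R, Real.sinc (κ * (y - 0)) * Real.sinc (κ * (y - t')) :=
        le_of_mul_le_mul_left (hlimit.trans_eq (by ring)) hwx₀
      have h2 := mul_le_mul_of_nonneg_left h1 hκ
      rw [mul_sub, mul_left_comm, hscale0, hscale, hκt'] at h2
      have h3 := integral_sinc_sq_le (R := κ * R) (by positivity)
      have h4 := neg_integral_sinc_mul_sinc_sub_le (R := κ * R) hT hT0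
        (hκt' ▸ mul_le_mul_of_nonneg_left hRt.le hκ) hε
      linarith
    have hbound' : ∀ ε : ℝ, 0 < ε → κ * τ ≤ Real.pi + 4 * (ε * Real.pi + 0) := fun ε hε => by
      refine ge_of_tendsto (((Tendsto.const_div_atTop ?_ 2).const_add (ε * Real.pi)).const_mul 4
        |>.const_add Real.pi) (eventually_atTop.2 ⟨1, fun k hk => hbound ε hε k hk⟩)
      exact ((tendsto_natCast_atTop_atTop.atTop_mul_const
        (by positivity)).atTop_mul_const hε)
    refine le_of_forall_pos_le_add fun δ hδ => ?_
    have := hbound' (δ / (4 * Real.pi)) (by positivity)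
    field_simp at this
    linarith
  · refine le_of_tendsto (tendsto_integral_sinc_sq.comp (tendsto_id.const_mul_atTop hκ0)) ?_
    filter_upwards [eventually_gt_atTop 0] with R hR
    simp only [Function.comp_def, id_eq]
    rw [← hscale0]
    exact mul_le_mul_of_nonneg_left (hsq R hR) hκ

theorem tendstoUniformlyOn_of_forall_ultrafilter {ι α β : Type*} [UniformSpace β] {l : Filter ι}
    {F : ι → α → β} {f : α → β} {s : Set α}
    (h : ∀ g : Ultrafilter ι, (g : Filter ι) ≤ l → TendstoUniformlyOn F f g s) :
    TendstoUniformlyOn F f l s :=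
  fun u hu => mem_iff_ultrafilter.2 fun g hg => h g hg u hu

/-- Along every ultrafilter the rescaled Christoffel–Darboux kernels converge to a sine kernel of
some scale. -/
theorem exists_tendstoUniformlyOn_CDKernel_sinc {μ : Measure ℝ} {p : ℕ → Polynomial ℝ}
    (hdeg : ∀ n, (p n).natDegree = n) (hlead : ∀ n, 0 < (p n).leadingCoeff)
    (horth : ∀ n m, (∫ x, (p n).eval x * (p m).eval x ∂μ) = if n = m then 1 else 0) {x₀ : ℝ}
    (hwiggle : ∀ A : ℝ, 0 < A →
      TendstoUniformlyOn
        (fun (n : ℕ) (a : ℝ) => CDKernel p n (x₀ + a / n) (x₀ + a / n) / CDKernel p n x₀ x₀)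
        (fun _ => 1) atTop (Icc (-A) A))
    {η : ℝ} (hη : 0 < η) (hlow : ∀ᶠ n : ℕ in atTop, η < (1 / (n + 1) : ℝ) * CDKernel p n x₀ x₀)
    (hcond3 : ∀ ε : ℝ, 0 < ε → ∃ Cε : ℝ, 0 < Cε ∧ ∀ R : ℝ, ∃ N : ℕ,
      ∀ n : ℕ, N < n → ∀ z : ℂ, ‖z‖ < R →
        (1 / (n + 1) : ℝ) *
            ∑ j ∈ Finset.range (n + 1), ‖Polynomial.aeval ((x₀ : ℂ) + z / n) (p j)‖ ^ 2 ≤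
          Cε * Real.exp (ε * ‖z‖ ^ 2))
    {l : Ultrafilter ℕ} (hl : (l : Filter ℕ) ≤ atTop) :
    ∃ κ : ℝ, 0 ≤ κ ∧ ∀ R : ℝ, TendstoUniformlyOn
      (fun n (xy : ℝ × ℝ) =>
        CDKernel p n (x₀ + xy.1 / n) (x₀ + xy.2 / n) / CDKernel p n x₀ x₀)
      (fun xy => Real.sinc (κ * (xy.2 - xy.1))) l (Icc (-R) R ×ˢ Icc (-R) R) := by
  choose C hC hCr hCd hid using exists_scaledKernel_eq hdeg hlead horth x₀
  obtain ⟨κ, hκ, hlim⟩ := exists_tendstoUniformlyOn_sinc (l := l)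
    (differentiable_scaledKernel (p := p) x₀) (scaledKernel_symm x₀) hC hCr hCd hid
    (scaledKernel_zero_zero hdeg hlead x₀) (scaledKernel_conj x₀) (norm_scaledKernel_sq_le x₀)
    (scaledDiag_pos hdeg hlead x₀) (scaledKernel_conj_right x₀)
    (exists_polynomial_eq_scaledKernel x₀) (fun ε hε => by
      obtain ⟨Cε, hCε, h⟩ := hcond3 ε hε
      refine ⟨Real.log (Cε / η), fun R => ?_⟩
      obtain ⟨N, hN⟩ := h R
      filter_upwards [hlow.filter_mono hl, (eventually_gt_atTop N).filter_mono hl] with n h1 h2 z hz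
      have h3 := hN n h2 z hz
      rw [Real.exp_add, Real.exp_log (by positivity), scaledDiag,
        div_le_iff₀ (CDKernel_self_pos hdeg hlead n x₀)]
      rw [one_div_mul_eq_div, div_le_iff₀ (by positivity)] at h3
      rw [one_div_mul_eq_div, lt_div_iff₀ (by positivity)] at h1
      calc _ ≤ Cε * Real.exp (ε * ‖z‖ ^ 2) * (n + 1) := h3
        _ = Cε / η * Real.exp (ε * ‖z‖ ^ 2) * (η * (n + 1)) := by field_simp
        _ ≤ Cε / η * Real.exp (ε * ‖z‖ ^ 2) * CDKernel p n x₀ x₀ := by gcongr)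
    fun x => by
      simp only [scaledDiag_ofReal]
      exact ((hwiggle (|x| + 1) (by positivity)).tendsto_at
        ⟨by linarith [neg_abs_le x], by linarith [le_abs_self x]⟩).mono_left hl
  refine ⟨κ, hκ, fun R => ?_⟩
  have h := hlim R
  simp only [scaledKernel_ofReal] at h
  rw [Metric.tendstoUniformlyOn_iff] at h ⊢
  refine fun ε hε => (h ε hε).mono fun n hn xy hxy => ?_
  simpa only [Complex.dist_of_im_eq, Complex.ofReal_im, Complex.ofReal_re] using hn xy hxy

theorem mul_integral_CDKernel_div {μ : Measure ℝ} {p : ℕ → Polynomial ℝ}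
    (hdeg : ∀ n, (p n).natDegree = n) (hlead : ∀ n, 0 < (p n).leadingCoeff)
    (horth : ∀ n m, (∫ x, (p n).eval x * (p m).eval x ∂μ) = if n = m then 1 else 0)
    (x₀ : ℝ) {n : ℕ} (hn : 0 < n) {k : ℝ} (x y : ℝ) :
    Integrable (fun s => CDKernel p n (x₀ + x / n) (x₀ + n * (s - x₀) / n) / k *
        (CDKernel p n (x₀ + y / n) (x₀ + n * (s - x₀) / n) / k)) μ ∧
      n * ∫ s, CDKernel p n (x₀ + x / n) (x₀ + n * (s - x₀) / n) / k *
        (CDKernel p n (x₀ + y / n) (x₀ + n * (s - x₀) / n) / k) ∂μ =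
        n / k * (CDKernel p n (x₀ + x / n) (x₀ + y / n) / k) := by
  have hn' : (n : ℝ) ≠ 0 := by exact_mod_cast hn.ne'
  obtain ⟨hi, he⟩ := integral_CDKernel_mul_CDKernel hdeg hlead horth n (x₀ + x / n) (x₀ + y / n)
  simp only [mul_div_cancel_left₀ _ hn', add_sub_cancel, div_mul_div_comm]
  refine ⟨hi.div_const _, ?_⟩
  rw [integral_div, he]
  ring

/-- **Theorem 1** of Avila–Last–Simon.  Let `μ` be a probability measure on `ℝ` with compact,
infinite support, `p_n` its orthonormal polynomials, `K_n` the CD kernel, `w` the a.c. weight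
`dμ/dx`, and let `x₀` be a Lebesgue point of `μ`.  Assume (1) the Lubinsky wiggle condition
`K_n(x₀ + a/n, x₀ + a/n)/K_n(x₀,x₀) → 1` uniformly for `a ∈ [-A, A]`, for every `A`;
(2) `liminf (1/(n+1)) K_n(x₀,x₀) > 0`; (3) for every `ε > 0` there is `C_ε > 0` so that for
every `R` there is `N` with `(1/(n+1)) K_n(x₀ + z/n, x₀ + z/n) ≤ C_ε exp(ε|z|²)` for `n > N`,
`|z| < R`.  Then, with `ρ_n = (1/n) w(x₀) K_n(x₀,x₀)`, weak bulk universality holds at `x₀`: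
`K_n(x₀ + a/(nρ_n), x₀ + b/(nρ_n))/K_n(x₀,x₀) → sin(π(b-a))/(π(b-a))` uniformly for `a, b` in
compact subsets of `ℝ`. -/
theorem stmt_0
    (μ : Measure ℝ) [IsProbabilityMeasure μ]
    (hsupp_cpt : IsCompact (measSupport μ)) (hsupp_inf : (measSupport μ).Infinite)
    (p : ℕ → Polynomial ℝ)
    (hdeg : ∀ n : ℕ, (p n).natDegree = n)
    (hlead : ∀ n : ℕ, 0 < (p n).leadingCoeff)
    (horth : ∀ n m : ℕ, (∫ x, (p n).eval x * (p m).eval x ∂μ) = if n = m then 1 else 0)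
    (w : ℝ → ℝ) (hw : w = fun x => (μ.rnDeriv volume x).toReal)
    (x₀ : ℝ) (hwx₀ : 0 < w x₀)
    (hLeb1 : Tendsto (fun δ : ℝ => (2 * δ)⁻¹ * ∫ x in Ioo (x₀ - δ) (x₀ + δ), |w x - w x₀|)
      (nhdsWithin 0 (Ioi 0)) (nhds 0))
    (hLeb2 : Tendsto
      (fun δ : ℝ => (2 * δ)⁻¹ * ((μ.singularPart volume) (Ioo (x₀ - δ) (x₀ + δ))).toReal)
      (nhdsWithin 0 (Ioi 0)) (nhds 0))
    (hwiggle : ∀ A : ℝ, 0 < A →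
      TendstoUniformlyOn
        (fun (n : ℕ) (a : ℝ) => CDKernel p n (x₀ + a / n) (x₀ + a / n) / CDKernel p n x₀ x₀)
        (fun _ => 1) atTop (Icc (-A) A))
    (hliminf : 0 < Filter.liminf (fun n : ℕ => (1 / (n + 1) : ℝ) * CDKernel p n x₀ x₀) atTop)
    (hcond3 : ∀ ε : ℝ, 0 < ε → ∃ Cε : ℝ, 0 < Cε ∧ ∀ R : ℝ, ∃ N : ℕ,
      ∀ n : ℕ, N < n → ∀ z : ℂ, ‖z‖ < R →
        (1 / (n + 1) : ℝ) *
            ∑ j ∈ Finset.range (n + 1), ‖Polynomial.aeval ((x₀ : ℂ) + z / n) (p j)‖ ^ 2 ≤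
          Cε * Real.exp (ε * ‖z‖ ^ 2))
    (ρ : ℕ → ℝ) (hρ : ρ = fun n : ℕ => (1 / n : ℝ) * w x₀ * CDKernel p n x₀ x₀) :
    ∀ A : ℝ, 0 < A →
      TendstoUniformlyOn
        (fun (n : ℕ) (ab : ℝ × ℝ) =>
          CDKernel p n (x₀ + ab.1 / (n * ρ n)) (x₀ + ab.2 / (n * ρ n)) / CDKernel p n x₀ x₀)
        (fun ab => if ab.1 = ab.2 then 1
          else Real.sin (Real.pi * (ab.2 - ab.1)) / (Real.pi * (ab.2 - ab.1)))
        atTop (Icc (-A) A ×ˢ Icc (-A) A) := by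
  intro A hA
  have hkpos := CDKernel_self_pos hdeg hlead
  obtain ⟨η, hη, hηlim⟩ := exists_between hliminf
  have hlow := eventually_lt_of_lt_liminf hηlim
    (isBoundedUnder_of ⟨0, fun n => by have := hkpos n x₀; positivity⟩)
  obtain ⟨B, hB, hB'⟩ := hcond3 1 one_pos
  obtain ⟨N, hN⟩ := hB' 1
  have hρmem : ∀ᶠ n : ℕ in atTop, ρ n ∈ Icc (w x₀ * η) (2 * (w x₀ * B)) := by
    filter_upwards [hlow, eventually_gt_atTop N, eventually_gt_atTop 0] with n h1 h2 h3
    have hn : (1 : ℝ) ≤ n := by exact_mod_cast h3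
    have h4 : scaledDiag p x₀ n 0 = 1 := by
      have := scaledDiag_ofReal (p := p) x₀ n 0
      simpa [div_self (hkpos n x₀).ne'] using this
    rw [scaledDiag, div_eq_one_iff_eq (hkpos n x₀).ne'] at h4
    have h5 := hN n h2 0 (by simp)
    rw [h4] at h5
    simp only [norm_zero, ne_eq, OfNat.ofNat_ne_zero, not_false_eq_true, zero_pow, mul_zero,
      Real.exp_zero, mul_one] at h5
    rw [one_div_mul_eq_div, div_le_iff₀ (by positivity)] at h5
    rw [one_div_mul_eq_div, lt_div_iff₀ (by positivity)] at h1
    simp only [hρ]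
    rw [mul_assoc, one_div_mul_eq_div, mem_Icc, le_div_iff₀ (by positivity),
      div_le_iff₀ (by positivity)]
    constructor
    · rw [mul_assoc]
      exact mul_le_mul_of_nonneg_left (by nlinarith) hwx₀.le
    · calc w x₀ * CDKernel p n x₀ x₀ ≤ w x₀ * (B * (2 * n)) :=
            mul_le_mul_of_nonneg_left (by nlinarith) hwx₀.le
        _ = 2 * (w x₀ * B) * n := by ring
  refine tendstoUniformlyOn_of_forall_ultrafilter fun l hl => ?_
  obtain ⟨ρ', hρ'mem, hρ'⟩ := isCompact_Icc.ultrafilter_le_nhds (l.map ρ)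
    (le_principal_iff.2 (mem_map.2 (hρmem.filter_mono hl)))
  have hρlim : Tendsto ρ l (nhds ρ') := hρ'
  have hρ'0 : 0 < ρ' := lt_of_lt_of_le (by positivity) hρ'mem.1
  obtain ⟨κ, hκ, hlim⟩ :=
    exists_tendstoUniformlyOn_CDKernel_sinc hdeg hlead horth hwiggle hη hlow hcond3 hl
  choose C _ hCr _ hid using exists_scaledKernel_eq hdeg hlead horth x₀
  have hκρ : κ * ρ'⁻¹ = Real.pi := by
    refine sinc_scale_mul_eq_pi hw hwx₀ hLeb1 hLeb2 hl
      (f := fun n x y => CDKernel p n (x₀ + x / n) (x₀ + y / n) / CDKernel p n x₀ x₀)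
      (C := fun n x => (C n x).re) (m := fun n => n / CDKernel p n x₀ x₀) hκ (fun n x => ?_)
      (fun n hn x y => mul_integral_CDKernel_div hdeg hlead horth x₀ hn x y)
      (fun n => by simp [div_self (hkpos n x₀).ne']) (fun n x y => ?_) ?_ hlim
    · unfold CDKernel
      fun_prop
    · have hre : ∀ x : ℝ, C n x = ((C n x).re : ℂ) := fun x =>
        Complex.ext rfl (by simpa using hCr n x)
      have h := hid n x y
      rw [← Complex.ofReal_zero, hre x, hre y] at h
      simp only [scaledKernel_ofReal] at h
      exact_mod_cast h
    · refine ((tendsto_const_nhds (x := w x₀)).mul (hρlim.inv₀ hρ'0.ne')).congr' ?_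
      filter_upwards [(eventually_gt_atTop 0).filter_mono hl] with n hn
      have hn' : (n : ℝ) ≠ 0 := by exact_mod_cast hn.ne'
      have := (hkpos n x₀).ne'
      have := hwx₀.ne'
      simp only [hρ]
      field_simp
  have hκ' : κ = Real.pi * ρ' := by
    rw [← hκρ]
    field_simp
  set δ := w x₀ * η with hδ
  have hδ0 : 0 < δ := by positivity
  have hdiv : ∀ r : ℝ, δ ≤ r → ∀ a ∈ Icc (-A) A, a / r ∈ Icc (-(A / δ)) (A / δ) := by
    intro r hr a ha
    rw [mem_Icc, ← abs_le, abs_div, abs_of_pos (hδ0.trans_le hr)]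
    exact div_le_div₀ hA.le (abs_le.2 ha) hδ0 hr
  have hinv : Tendsto (fun n => (ρ n)⁻¹) l (nhds ρ'⁻¹) := hρlim.inv₀ hρ'0.ne'
  have hunif : TendstoUniformlyOn (fun n (ab : ℝ × ℝ) => (ab.1 / ρ n, ab.2 / ρ n))
      (fun ab => (ab.1 / ρ', ab.2 / ρ')) l (Icc (-A) A ×ˢ Icc (-A) A) := by
    rw [Metric.tendstoUniformlyOn_iff]
    intro ε hε
    filter_upwards [Metric.tendsto_nhds.1 hinv (ε / A) (by positivity)] with n hn ab hab
    rw [dist_comm, Real.dist_eq, lt_div_iff₀ hA] at hn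
    have key : ∀ a ∈ Icc (-A) A, dist (a / ρ') (a / ρ n) < ε := fun a ha => by
      rw [Real.dist_eq, div_eq_mul_inv, div_eq_mul_inv, ← mul_sub, abs_mul, mul_comm]
      exact (mul_le_mul_of_nonneg_left (abs_le.2 ha) (abs_nonneg _)).trans_lt hn
    rw [Prod.dist_eq]
    exact max_lt (key _ hab.1) (key _ hab.2)
  have hmain := (hlim (A / δ)).comp_tendstoUniformlyOn
    ((isCompact_Icc.prod isCompact_Icc).uniformContinuousOn_of_continuous
      (Continuous.continuousOn (by fun_prop))) hunif
    ((hρmem.filter_mono hl).mono fun n hn ab hab => ⟨hdiv _ hn.1 _ hab.1, hdiv _ hn.1 _ hab.2⟩)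
    fun ab hab => ⟨hdiv _ hρ'mem.1 _ hab.1, hdiv _ hρ'mem.1 _ hab.2⟩
  refine (hmain.congr (Eventually.of_forall fun n ab _ => ?_)).congr_right fun ab _ => ?_
  · simp only [div_div, mul_comm]
  · have : κ * (ab.2 / ρ' - ab.1 / ρ') = Real.pi * (ab.2 - ab.1) := by
      rw [hκ']
      field_simp
    simp only [this]
    split_ifs with h
    · simp [h]
    · exact Real.sinc_of_ne_zero (mul_ne_zero Real.pi_ne_zero (sub_ne_zero.2 (Ne.symm h)))
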